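/- Let Δ be a 3-dimensional normal pseudomanifold with g₂(Δ) = g₂(lk(t,Δ)) for some vertex t (Δ is g₂-minimal with respect to t). If Ω is an induced subcomplex of Δ that is a circle (a cycle whose vertices span no additional edges of Δ), then Ω ⊆ st(t, Δ); in particular every vertex of Ω is t or a neighbour of t. -/

import Mathlib

open Finset

/-- An abstract simplicial complex on vertex type `V`, given by its finite set of
(nonempty) faces, closed under taking nonempty subsets. -/
structure SComplex (V : Type) [DecidableEq V] where
  faces : Finset (Finset V)
  nonempty_of_mem : ∀ σ ∈ faces, σ.Nonempty
  down_closed : ∀ σ ∈ faces, ∀ τ ⊆ σ, τ.Nonempty → τ ∈ faces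

namespace SComplex

variable {V : Type} [DecidableEq V]

/-- the number `f_k` of `k`-dimensional faces -/
def fNum (K : SComplex V) (k : ℕ) : ℕ := (K.faces.filter fun σ => σ.card = k + 1).card

/-- `g₂` of a `d`-dimensional complex: `f₁ - (d+1) f₀ + C(d+2,2)` -/
def g2 (K : SComplex V) (d : ℕ) : ℤ :=
  (K.fNum 1 : ℤ) - (d + 1) * (K.fNum 0 : ℤ) + (Nat.choose (d + 2) 2 : ℤ)

/-- the vertex set of a complex -/
def vertices (K : SComplex V) : Finset V := K.faces.sup id

/-- the link of a face `σ` -/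
def link (K : SComplex V) (σ : Finset V) : SComplex V where
  faces := K.faces.filter fun τ => σ ∩ τ = ∅ ∧ σ ∪ τ ∈ K.faces
  nonempty_of_mem τ hτ := K.nonempty_of_mem τ (mem_filter.mp hτ).1
  down_closed := by
    intro τ hτ ρ hρ hne
    rw [mem_filter] at hτ ⊢
    obtain ⟨h1, h2, h3⟩ := hτ
    refine ⟨K.down_closed τ h1 ρ hρ hne, subset_empty.mp ?_, 
      K.down_closed _ h3 _ (union_subset_union Subset.rfl hρ) ?_⟩
    · exact h2 ▸ inter_subset_inter Subset.rfl hρ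
    · obtain ⟨w, hw⟩ := hne
      exact ⟨w, mem_union_right _ hw⟩

/-- the (closed) star of a vertex `t` -/
def star (K : SComplex V) (t : V) : SComplex V where
  faces := K.faces.filter fun τ => insert t τ ∈ K.faces
  nonempty_of_mem τ hτ := K.nonempty_of_mem τ (mem_filter.mp hτ).1
  down_closed := by
    intro τ hτ ρ hρ hne
    rw [mem_filter] at hτ ⊢
    exact ⟨K.down_closed τ hτ.1 ρ hρ hne,
      K.down_closed _ hτ.2 _ (insert_subset_insert _ hρ) (insert_nonempty _ _)⟩

/-- connectivity of a complex (through edges) -/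
def Connected (K : SComplex V) : Prop :=
  ∀ u ∈ K.vertices, ∀ w ∈ K.vertices,
    Relation.ReflTransGen (fun a b => ({a, b} : Finset V) ∈ K.faces) u w

/-- purity: every face is contained in a `d`-dimensional face -/
def Pure (K : SComplex V) (d : ℕ) : Prop :=
  ∀ σ ∈ K.faces, ∃ τ ∈ K.faces, σ ⊆ τ ∧ τ.card = d + 1

/-- strong connectivity through facets sharing `(d-1)`-faces -/
def StronglyConnected (K : SComplex V) (d : ℕ) : Prop :=
  ∀ σ ∈ K.faces, ∀ τ ∈ K.faces, σ.card = d + 1 → τ.card = d + 1 →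
    Relation.ReflTransGen
      (fun a b => a ∈ K.faces ∧ b ∈ K.faces ∧ a.card = d + 1 ∧ b.card = d + 1 ∧ (a ∩ b).card = d)
      σ τ

/-- `K` is a `d`-dimensional pseudomanifold -/
def IsPseudomanifold (K : SComplex V) (d : ℕ) : Prop :=
  K.Pure d ∧
  (∀ σ ∈ K.faces, σ.card = d →
    (K.faces.filter fun τ => σ ⊆ τ ∧ τ.card = d + 1).card = 2) ∧
  K.StronglyConnected d

/-- `K` is a `d`-dimensional normal pseudomanifold: a pseudomanifold all of whose
faces of codimension at least two have connected links -/
def IsNormal (K : SComplex V) (d : ℕ) : Prop :=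
  K.IsPseudomanifold d ∧ ∀ σ ∈ K.faces, σ.card + 1 ≤ d → (K.link σ).Connected

/-- the geometric realization of `K`, inside `V → ℝ` -/
def realization (K : SComplex V) [Fintype V] : Set (V → ℝ) :=
  {f | ∃ σ ∈ K.faces, (∀ v, v ∉ σ → f v = 0) ∧ (∀ v, 0 ≤ f v) ∧ (∑ v, f v) = 1}

end SComplex

/-- the standard 2-sphere -/
noncomputable def Sphere2 : Set (EuclideanSpace ℝ (Fin 3)) := Metric.sphere 0 1

/-- the real projective plane, as the quotient of the 2-sphere by the antipodal map -/
def RealProjPlane : Type :=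
  Quot fun a b : Sphere2 => (a : EuclideanSpace ℝ (Fin 3)) = -(b : EuclideanSpace ℝ (Fin 3))

noncomputable instance : TopologicalSpace RealProjPlane := by unfold RealProjPlane; infer_instance

noncomputable def UnitSquare : Set (ℝ × ℝ) := Set.Icc 0 1 ×ˢ Set.Icc 0 1

/-- the Möbius band, as a quotient of the unit square -/
def MobiusBand : Type :=
  Quot fun a b : UnitSquare =>
    (a : ℝ × ℝ).1 = 0 ∧ (b : ℝ × ℝ).1 = 1 ∧ (b : ℝ × ℝ).2 = 1 - (a : ℝ × ℝ).2

noncomputable instance : TopologicalSpace MobiusBand := by unfold MobiusBand; infer_instance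

noncomputable def ClosedDisc : Set (ℝ × ℝ) := Metric.closedBall 0 1

namespace SComplex

variable {V : Type} [DecidableEq V] [Fintype V]

/-- the carrier of `K` is a 2-sphere -/
def IsSphere2 (K : SComplex V) : Prop := Nonempty (K.realization ≃ₜ Sphere2)

/-- the carrier of `K` is a real projective plane -/
def IsRP2 (K : SComplex V) : Prop := Nonempty (K.realization ≃ₜ RealProjPlane)

/-- `K` is a triangulated Möbius strip -/
def IsMobius (K : SComplex V) : Prop := Nonempty (K.realization ≃ₜ MobiusBand)

/-- `K` is a triangulated disc -/
def IsDisc (K : SComplex V) : Prop := Nonempty (K.realization ≃ₜ ClosedDisc)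

end SComplex

namespace SComplex

variable {V : Type} [DecidableEq V]

/-- `K` is the boundary complex of a `(d+1)`-simplex: all proper nonempty subsets
of a set of `d+2` vertices. -/
def IsBoundarySimplex (K : SComplex V) (d : ℕ) : Prop :=
  ∃ W : Finset V, W.card = d + 2 ∧ K.faces = (W.powerset.erase W).erase ∅

/-- `Δ'` is obtained from the `d`-dimensional complex `Δ` by a single facet
subdivision: remove a facet `σ`, add a new vertex `w`, and add all faces
`w ⋆ τ` for proper faces `τ` of `σ`. -/
def FacetSubdivision (Δ Δ' : SComplex V) (d : ℕ) : Prop :=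
  ∃ σ ∈ Δ.faces, ∃ w : V, σ.card = d + 1 ∧ (∀ τ ∈ Δ.faces, w ∉ τ) ∧
    Δ'.faces = (Δ.faces.erase σ) ∪ (σ.powerset.erase σ).image (insert w)

/-- a stacked `d`-sphere: obtained from the boundary complex of a `(d+1)`-simplex
by a finite sequence of facet subdivisions. -/
def IsStackedSphere (K : SComplex V) (d : ℕ) : Prop :=
  ∃ K₀ : SComplex V, K₀.IsBoundarySimplex d ∧
    Relation.ReflTransGen (fun A B => FacetSubdivision A B d) K₀ K

end SComplex

namespace SComplex

variable {V : Type} [DecidableEq V]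

/-- `Ω` is a circle (cycle) complex: 1-dimensional, connected, with at least 3
vertices, every vertex lying on exactly two edges -/
def IsCircle (Ω : SComplex V) : Prop :=
  (∀ σ ∈ Ω.faces, σ.card ≤ 2) ∧ Ω.Connected ∧ 3 ≤ Ω.vertices.card ∧
    ∀ v ∈ Ω.vertices, (Ω.faces.filter fun e => e.card = 2 ∧ v ∈ e).card = 2

end SComplex


namespace HypRig

open Matrix

variable {V : Type}

/-- The filter of Zariski-generic configurations. -/
def gen (V : Type) : Filter (V → Fin 4 → ℚ) where
  sets := {U | ∃ f : MvPolynomial (V × Fin 4) ℚ, f ≠ 0 ∧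
    ∀ p : V → Fin 4 → ℚ, MvPolynomial.eval (fun q => p q.1 q.2) f ≠ 0 → p ∈ U}
  univ_sets := ⟨1, one_ne_zero, fun _ _ => trivial⟩
  sets_of_superset := by
    rintro U W ⟨f, hf, h⟩ hUW
    exact ⟨f, hf, fun p hp => hUW (h p hp)⟩
  inter_sets := by
    rintro U W ⟨f, hf, h⟩ ⟨g, hg, h'⟩
    refine ⟨f * g, mul_ne_zero hf hg, fun p hp => ?_⟩
    rw [map_mul] at hp
    exact ⟨h p (left_ne_zero_of_mul hp), h' p (right_ne_zero_of_mul hp)⟩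

theorem gen_iff (P : (V → Fin 4 → ℚ) → Prop) :
    (∀ᶠ p in gen V, P p) ↔ ∃ f : MvPolynomial (V × Fin 4) ℚ, f ≠ 0 ∧
    ∀ p : V → Fin 4 → ℚ, MvPolynomial.eval (fun q => p q.1 q.2) f ≠ 0 → P p := Iff.rfl

instance gen_neBot : (gen V).NeBot := by
  rw [Filter.neBot_iff]
  intro h
  have : (∀ᶠ p in gen V, False) := by rw [h]; trivial
  obtain ⟨f, hf, h⟩ := (gen_iff _).1 this
  apply hf
  apply MvPolynomial.funext
  intro x
  by_contra hx
  rw [map_zero] at hx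
  exact h (fun a b => x (a, b)) hx

theorem ne_zero_of_eval (f : MvPolynomial (V × Fin 4) ℚ) (p : V → Fin 4 → ℚ) 
    (h : MvPolynomial.eval (fun q => p q.1 q.2) f ≠ 0) : f ≠ 0 := by
  rintro rfl
  exact h (map_zero _)

/-- Generic injectivity of a polynomial matrix. -/
theorem gen_inj {ι κ : Type} [Fintype ι] [DecidableEq ι] [Fintype κ] [DecidableEq κ]
    (M : Matrix κ ι (MvPolynomial (V × Fin 4) ℚ)) (p0 : V → Fin 4 → ℚ)
    (h : Function.Injective (M.map (MvPolynomial.eval (fun q => p0 q.1 q.2))).mulVec) :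
    ∀ᶠ p in gen V,
      Function.Injective (M.map (MvPolynomial.eval (fun q => p q.1 q.2))).mulVec := by
  have hk : LinearMap.ker (Matrix.mulVecLin
      (M.map (MvPolynomial.eval (fun q => p0 q.1 q.2)))) = ⊥ := LinearMap.ker_eq_bot.2 h
  obtain ⟨g, hg⟩ := LinearMap.exists_leftInverse_of_injective _ hk
  set N := LinearMap.toMatrix' g with hN
  have hNM : N * (M.map (MvPolynomial.eval (fun q => p0 q.1 q.2))) = 1 := by
    have := congrArg LinearMap.toMatrix' hg
    rw [LinearMap.toMatrix'_comp, LinearMap.toMatrix'_id, ← Matrix.toLin'_apply', LinearMap.toMatrix'_toLin'] at this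
    exact this
  let NC : Matrix ι κ (MvPolynomial (V × Fin 4) ℚ) := N.map MvPolynomial.C
  let P : Matrix ι ι (MvPolynomial (V × Fin 4) ℚ) := NC * M
  have hP : ∀ p : V → Fin 4 → ℚ, MvPolynomial.eval (fun q => p q.1 q.2) P.det
      = (N * (M.map (MvPolynomial.eval (fun q => p q.1 q.2)))).det := by
    intro p
    rw [RingHom.map_det]
    congr 1
    ext i j
    simp [P, NC, Matrix.mul_apply]
  refine (gen_iff _).2 ⟨P.det, ?_, ?_⟩
  · apply ne_zero_of_eval _ p0
    rw [hP, hNM]; simp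
  · intro p hp
    rw [hP] at hp
    have h1 := Matrix.mulVec_injective_iff_isUnit.2
      ((Matrix.isUnit_iff_isUnit_det _).2 (isUnit_iff_ne_zero.2 hp))
    intro a b hab
    apply h1
    simp only [← Matrix.mulVec_mulVec]
    rw [hab]

theorem gen_indep [DecidableEq V] (B : Fin 4 → V) (hB : Function.Injective B) :
    ∀ᶠ p in gen V, LinearIndependent ℚ (fun k => p (B k)) := by
  let M : Matrix (Fin 4) (Fin 4) (MvPolynomial (V × Fin 4) ℚ) :=
    Matrix.of fun k l => MvPolynomial.X (B k, l)
  have hM : ∀ p : V → Fin 4 → ℚ, MvPolynomial.eval (fun q => p q.1 q.2) M.det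
      = (Matrix.of fun k => p (B k)).det := by
    intro p
    rw [RingHom.map_det]
    congr 1
    ext i j
    simp [M]
  refine (gen_iff _).2 ⟨M.det, ?_, ?_⟩
  · obtain ⟨g, hg⟩ := hB.hasLeftInverse
    apply ne_zero_of_eval _ (fun w l => if g w = l then 1 else 0)
    refine ne_of_eq_of_ne (hM (fun w l => if g w = l then 1 else 0)) ?_
    have : (Matrix.of fun k => (fun w l => if g w = l then (1:ℚ) else 0) (B k)) = (1 : Matrix (Fin 4) (Fin 4) ℚ) := by
      ext i j
      simp [hg i, Matrix.one_apply]
    rw [this]; simp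
  · intro p hp
    rw [hM] at hp
    exact Matrix.linearIndependent_rows_of_det_ne_zero hp

theorem dot_zero {b : Fin 4 → Fin 4 → ℚ} (hb : LinearIndependent ℚ b) {z : Fin 4 → ℚ}
    (h : ∀ k, b k ⬝ᵥ z = 0) : z = 0 := by
  have h1 : IsUnit (Matrix.of b) := Matrix.linearIndependent_rows_iff_isUnit.1 hb
  have h2 := Matrix.mulVec_injective_iff_isUnit.2 h1
  apply h2
  ext k
  simpa [Matrix.mulVec] using h k

theorem mat_unique {b : Fin 4 → Fin 4 → ℚ} (hb : LinearIndependent ℚ b)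
    {A A' : Matrix (Fin 4) (Fin 4) ℚ} (h : ∀ k, A *ᵥ b k = A' *ᵥ b k) : A = A' := by
  ext i j
  have : A i - A' i = 0 := by
    apply dot_zero hb
    intro k
    have := congrFun (h k) i
    simp only [Matrix.mulVec] at this
    rw [dotProduct_sub, dotProduct_comm, this, dotProduct_comm, sub_self]
  have := congrFun this j
  simpa [sub_eq_zero] using this

theorem clique_mat {b y : Fin 4 → Fin 4 → ℚ} (hb : LinearIndependent ℚ b)
    (h : ∀ k l, b l ⬝ᵥ y k = b k ⬝ᵥ y l) :
    ∃ A : Matrix (Fin 4) (Fin 4) ℚ, A.IsSymm ∧ ∀ k, y k = A *ᵥ b k := by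
  have h1 : IsUnit (Matrix.of b) := Matrix.linearIndependent_rows_iff_isUnit.1 hb
  have h1' : IsUnit (Matrix.of b).det := (Matrix.isUnit_iff_isUnit_det _).1 h1
  set Bm := Matrix.of b
  set Y := Matrix.of y
  have hs : (Y * Bmᵀ)ᵀ = Y * Bmᵀ := by
    ext k l
    simp only [Matrix.transpose_apply, Matrix.mul_apply']
    have := h k l
    change y l ⬝ᵥ b k = y k ⬝ᵥ b l
    rw [dotProduct_comm, ← this, dotProduct_comm]
  have hA : Bm⁻¹ * (Y * Bmᵀ) * (Bm⁻¹)ᵀ = Bm⁻¹ * Y := by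
    rw [Matrix.mul_assoc, Matrix.mul_assoc Y, ← Matrix.transpose_mul, Matrix.nonsing_inv_mul _ h1']
    simp
  have hsym : (Bm⁻¹ * Y)ᵀ = Bm⁻¹ * Y := by
    rw [← hA, Matrix.transpose_mul, Matrix.transpose_mul, hs, Matrix.transpose_transpose, ← Matrix.mul_assoc]
  refine ⟨Bm⁻¹ * Y, hsym, fun k => ?_⟩
  rw [← hsym, Matrix.mulVec_transpose]
  have : Bm * (Bm⁻¹ * Y) = Y := by
    rw [← Matrix.mul_assoc, Matrix.mul_nonsing_inv _ h1', Matrix.one_mul]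
  have h3 := congrFun this k
  rw [Matrix.mul_apply_eq_vecMul] at h3
  exact h3.symm

theorem symm_dot {A : Matrix (Fin 4) (Fin 4) ℚ} (hA : A.IsSymm) (a b : Fin 4 → ℚ) :
    a ⬝ᵥ (A *ᵥ b) = b ⬝ᵥ (A *ᵥ a) := by
  rw [dotProduct_mulVec, ← Matrix.mulVec_transpose, hA.eq, dotProduct_comm]

/-- `x` is a motion of the graph `E` at `p`. -/
def Mot (E : V → V → Prop) (p x : V → Fin 4 → ℚ) : Prop :=
  ∀ i j, E i j → p j ⬝ᵥ x i = p i ⬝ᵥ x j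

/-- `x` is trivial on `S` through `A`. -/
def Triv (S : Finset V) (p x : V → Fin 4 → ℚ) (A : Matrix (Fin 4) (Fin 4) ℚ) : Prop :=
  A.IsSymm ∧ ∀ i ∈ S, x i = A *ᵥ p i

def Rig (E : V → V → Prop) (S : Finset V) (p : V → Fin 4 → ℚ) : Prop :=
  ∀ x, Mot E p x → ∃ A, Triv S p x A

theorem semicont [DecidableEq V] (E : V → V → Prop) (S : Finset V)
    (hES : ∀ i j, E i j → i ∈ S ∧ j ∈ S)
    (B : Fin 4 → V) (hB : ∀ k, B k ∈ S) (hBE : ∀ k l, E (B k) (B l))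
    (p0 : V → Fin 4 → ℚ) (h0 : LinearIndependent ℚ (fun k => p0 (B k)))
    (hR : Rig E S p0) : ∀ᶠ p in gen V, Rig E S p := by
  classical
  have hBinj : Function.Injective B := fun a b hab => h0.injective (by simp [hab])
  let M : Matrix ((S × S) ⊕ (Fin 4 × Fin 4)) (S × Fin 4) (MvPolynomial (V × Fin 4) ℚ) :=
    Matrix.of fun r c => match r with
      | Sum.inl (i, j) => if E i j then (if c.1 = i then MvPolynomial.X (j.1, c.2) else 0)
          - (if c.1 = j then MvPolynomial.X (i.1, c.2) else 0) else 0
      | Sum.inr (k, l) => if c.1.1 = B k ∧ c.2 = l then 1 else 0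
  have hM1 : ∀ (p : V → Fin 4 → ℚ) (x : S × Fin 4 → ℚ) (i j : S), 
      ((M.map (MvPolynomial.eval (fun q => p q.1 q.2))) *ᵥ x) (Sum.inl (i, j))
      = if E i j then p j ⬝ᵥ (fun l => x (i, l)) - p i ⬝ᵥ (fun l => x (j, l)) else 0 := by
    intro p x i j
    by_cases hE : E i j
    · simp only [Matrix.mulVec, dotProduct, M, Matrix.map_apply, Matrix.of_apply, hE, if_true,
        map_sub, apply_ite (MvPolynomial.eval (fun q : V × Fin 4 => p q.1 q.2)), map_zero, MvPolynomial.eval_X,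
        sub_mul, Finset.sum_sub_distrib, Fintype.sum_prod_type, ite_mul, zero_mul]
      congr 1
      · rw [Finset.sum_comm]; simp
      · rw [Finset.sum_comm]; simp
    · simp [Matrix.mulVec, dotProduct, M, hE]
  have hM2 : ∀ (p : V → Fin 4 → ℚ) (x : S × Fin 4 → ℚ) (k l : Fin 4), 
      ((M.map (MvPolynomial.eval (fun q => p q.1 q.2))) *ᵥ x) (Sum.inr (k, l))
      = x (⟨B k, hB k⟩, l) := by
    intro p x k l
    have : ∀ c : S × Fin 4, (c.1.1 = B k ∧ c.2 = l) ↔ c = (⟨B k, hB k⟩, l) := by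
      rintro ⟨⟨c, hc⟩, m⟩; simp
    simp [Matrix.mulVec, dotProduct, M, this, apply_ite (MvPolynomial.eval (fun q : V × Fin 4 => p q.1 q.2))]
  have key : ∀ᶠ p in gen V,
      Function.Injective (M.map (MvPolynomial.eval (fun q => p q.1 q.2))).mulVec := by
    apply gen_inj M p0
    rw [← Matrix.coe_mulVecLin, injective_iff_map_eq_zero]
    intro x hx
    rw [Matrix.mulVecLin_apply] at hx
    let y : V → Fin 4 → ℚ := fun i l => if h : i ∈ S then x (⟨i, h⟩, l) else 0
    have hy : ∀ i : S, y i = fun l => x (i, l) := by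
      intro i; ext l; simp [y]
    have hmot : Mot E p0 y := by
      intro i j hE
      obtain ⟨hi, hj⟩ := hES i j hE
      have := hM1 p0 x ⟨i, hi⟩ ⟨j, hj⟩
      rw [hx] at this
      simp only [hE, if_true, ← hy] at this
      simp at this
      linarith
    obtain ⟨A, hA, hA'⟩ := hR y hmot
    have hA0 : A = 0 := by
      apply mat_unique h0
      intro k
      rw [← hA' _ (hB k)]
      ext l
      have := hM2 p0 x k l
      rw [hx] at this
      simp only [Matrix.zero_mulVec]
      have h2 := congrFun (hy ⟨B k, hB k⟩) l
      simp only at h2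
      rw [h2, ← this]
      rfl
    ext ⟨i, l⟩
    have := hA' i i.2
    rw [hy, hA0, Matrix.zero_mulVec] at this
    exact congrFun this l
  filter_upwards [key, gen_indep B hBinj] with p hp hI x hx
  obtain ⟨A, hA, hA'⟩ := clique_mat (b := fun k => p (B k)) (y := fun k => x (B k)) hI
    (fun k l => hx _ _ (hBE k l))
  refine ⟨A, hA, fun i hi => ?_⟩
  have h1 : (fun c : S × Fin 4 => x c.1 c.2 - (A *ᵥ p c.1) c.2) = 0 := by
    apply hp
    rw [Matrix.mulVec_zero]
    ext r
    rcases r with ⟨i, j⟩ | ⟨k, l⟩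
    · rw [hM1]
      split_ifs with hE
      · have e1 := hx _ _ hE
        have e2 := symm_dot hA (p j) (p i)
        change p j ⬝ᵥ (x i - A *ᵥ p i) - p i ⬝ᵥ (x j - A *ᵥ p j) = 0
        rw [dotProduct_sub, dotProduct_sub, e1, e2]; ring
      · rfl
    · rw [hM2]
      have := congrFun (hA' k) l
      simp only at this ⊢
      rw [this, sub_self]; rfl
  ext l
  have := congrFun h1 (⟨i, hi⟩, l)
  simpa [sub_eq_zero] using this

section chains
variable [DecidableEq V]

def vert (Z : Finset (Finset V)) : Finset V := Z.biUnion id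

theorem mem_vert {Z : Finset (Finset V)} {a : V} : a ∈ vert Z ↔ ∃ σ ∈ Z, a ∈ σ := by
  simp [vert]

/-- mod 2 two-dimensional cycles -/
def IsCyc (Z : Finset (Finset V)) : Prop :=
  (∀ σ ∈ Z, σ.card = 3) ∧ ∀ a b, a ≠ b → Even (Z.filter fun σ => a ∈ σ ∧ b ∈ σ).card

def MinCyc (Z : Finset (Finset V)) : Prop :=
  IsCyc Z ∧ Z.Nonempty ∧ ∀ W ⊆ Z, IsCyc W → W.Nonempty → W = Z

/-- cone graph -/
def Et (t : V) (Z : Finset (Finset V)) (i j : V) : Prop :=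
  ∃ σ ∈ Z, i ∈ insert t σ ∧ j ∈ insert t σ

theorem parity_vertex {W : Finset (Finset V)} (hW : ∀ σ ∈ W, σ.card = 3) (u v : V) (huv : u ≠ v)
    (h : ∀ a, a ≠ u → a ≠ v → Even (W.filter fun σ => u ∈ σ ∧ a ∈ σ).card) :
    Even (W.filter fun σ => u ∈ σ ∧ v ∈ σ).card := by
  have h1 : ∑ a ∈ (insert v (vert W)).erase u, (W.filter fun σ => u ∈ σ ∧ a ∈ σ).card
      = ∑ σ ∈ W.filter (fun σ => u ∈ σ), 2 := by
    have : ∀ a, (W.filter fun σ => u ∈ σ ∧ a ∈ σ) = (W.filter (fun σ => u ∈ σ)).filter (fun σ => a ∈ σ) := by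
      intro a; rw [filter_filter]
    simp only [this]
    have := Finset.sum_card_bipartiteAbove_eq_sum_card_bipartiteBelow (s := (insert v (vert W)).erase u)
      (t := W.filter (fun σ => u ∈ σ)) (fun a σ => a ∈ σ)
    simp only [Finset.bipartiteAbove, Finset.bipartiteBelow] at this
    rw [this]
    apply Finset.sum_congr rfl
    intro σ hσ
    rw [mem_filter] at hσ
    have : (((insert v (vert W)).erase u).filter fun a => a ∈ σ) = σ.erase u := by
      ext a
      simp only [mem_filter, mem_erase, mem_insert, mem_vert]
      constructor
      · rintro ⟨⟨h1, _⟩, h2⟩; exact ⟨h1, h2⟩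
      · rintro ⟨h1, h2⟩; exact ⟨⟨h1, Or.inr ⟨σ, hσ.1, h2⟩⟩, h2⟩
    rw [this, card_erase_of_mem hσ.2, hW σ hσ.1]
  rw [← Finset.add_sum_erase _ _ (a := v) (by simp [huv.symm])] at h1
  have h2 : Even (∑ a ∈ ((insert v (vert W)).erase u).erase v, (W.filter fun σ => u ∈ σ ∧ a ∈ σ).card) := by
    apply Finset.even_sum
    intro a ha
    simp only [mem_erase] at ha
    exact h a ha.2.1 ha.1
  have h3 : Even (∑ σ ∈ W.filter (fun σ => u ∈ σ), 2) := Finset.even_sum _ (fun _ _ => even_two)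
  rw [← h1, Nat.even_add] at h3
  exact h3.2 h2

theorem exists_min {Z : Finset (Finset V)} (hZ : IsCyc Z) {τ : Finset V} (hτ : τ ∈ Z) :
    ∃ W ⊆ Z, MinCyc W ∧ τ ∈ W := by
  classical
  have hne : (Z.powerset.filter fun W => IsCyc W ∧ τ ∈ W).Nonempty :=
    ⟨Z, by simp [hZ, hτ]⟩
  obtain ⟨W, hW, hmin⟩ := Finset.exists_min_image _ Finset.card hne
  simp only [mem_filter, mem_powerset] at hW hmin
  refine ⟨W, hW.1, ⟨hW.2.1, ⟨τ, hW.2.2⟩, ?_⟩, hW.2.2⟩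
  intro U hU hUc hUne
  by_cases hτU : τ ∈ U
  · exact Finset.eq_of_subset_of_card_le hU (hmin U ⟨hU.trans hW.1, hUc, hτU⟩)
  · exfalso
    have hc : IsCyc (W \ U) := by
      refine ⟨fun σ hσ => hW.2.1.1 σ (mem_sdiff.1 hσ).1, fun a b hab => ?_⟩
      have h1 := hW.2.1.2 a b hab
      have h2 := hUc.2 a b hab
      have h3 : ((W \ U).filter fun σ => a ∈ σ ∧ b ∈ σ) =
        (W.filter fun σ => a ∈ σ ∧ b ∈ σ) \ (U.filter fun σ => a ∈ σ ∧ b ∈ σ) := by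
        ext σ; simp only [mem_filter, mem_sdiff]; tauto
      rw [h3, card_sdiff_of_subset (filter_subset_filter _ hU)]
      exact (Nat.even_sub (card_le_card (filter_subset_filter _ hU))).2 ⟨fun _ => h2, fun _ => h1⟩
    have := hmin (W \ U) ⟨sdiff_subset.trans hW.1, hc, by simp [hW.2.2, hτU]⟩
    rw [card_sdiff_of_subset hU] at this
    have := hUne.card_pos
    have := card_le_card hU
    omega

/-- the contraction of `v` to `u` -/
def con (u v : V) (w : V) : V := if w = v then u else w

theorem con_self (u v : V) : con u v v = u := by simp [con]
theorem con_ne (u v : V) {w : V} (h : w ≠ v) : con u v w = w := by simp [con, h]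

theorem card_con {u v : V} {σ : Finset V} (huv : ¬ (u ∈ σ ∧ v ∈ σ)) :
    (σ.image (con u v)).card = σ.card := by
  apply card_image_of_injOn
  intro a ha b hb hab
  simp only [con] at hab
  simp only [mem_coe] at ha hb
  grind

theorem card_con' {u v : V} (h : u ≠ v) {σ : Finset V} (huv : (u ∈ σ ∧ v ∈ σ)) :
    (σ.image (con u v)).card < σ.card := by
  apply lt_of_le_of_ne card_image_le
  intro hc
  have := card_image_iff.1 hc (mem_coe.2 huv.1) (mem_coe.2 huv.2) (by rw [con_self, con_ne _ _ h])
  exact h this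

theorem mem_con {u v : V} {σ : Finset V} {a : V} :
    a ∈ σ.image (con u v) ↔ (a ≠ v ∧ a ∈ σ) ∨ (a = u ∧ v ∈ σ) := by
  simp only [mem_image, con]
  grind

/-- the mod 2 push-forward -/
def push (u v : V) (Z : Finset (Finset V)) : Finset (Finset V) :=
  (Z.image (fun σ => σ.image (con u v))).filter fun σ' => σ'.card = 3 ∧
    Odd (Z.filter fun σ => σ.image (con u v) = σ').card

/-- fibre counting mod 2 -/
theorem fibre_parity {u v : V} (Z Z' : Finset (Finset V))
    (hodd : ∀ σ' ∈ Z', Odd (Z.filter fun σ => σ.image (con u v) = σ').card) (P : Finset V → Prop)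
    [DecidablePred P] :
    (Even (Z.filter fun σ => σ.image (con u v) ∈ Z' ∧ P (σ.image (con u v))).card ↔
      Even (Z'.filter P).card) := by
  have h := Finset.card_eq_sum_card_fiberwise
    (s := Z.filter fun σ => σ.image (con u v) ∈ Z' ∧ P (σ.image (con u v)))
    (t := Z'.filter P) (f := fun σ => σ.image (con u v)) (by
      intro σ hσ
      simp only [coe_filter, Set.mem_ofPred_eq] at hσ ⊢
      exact hσ.2)
  rw [h, Finset.even_sum_iff_even_card_odd]
  rw [Finset.filter_true_of_mem]
  intro σ' hσ'
  rw [mem_filter] at hσ'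
  have := hodd σ' hσ'.1
  convert this using 2
  ext σ
  simp only [mem_filter]
  constructor
  · rintro ⟨⟨h1, _⟩, h2⟩; exact ⟨h1, h2⟩
  · rintro ⟨h1, h2⟩; exact ⟨⟨h1, by rw [h2]; exact hσ'⟩, h2⟩

theorem even_aux (Y : Finset (Finset V)) (u v a : V)  (hY : ∀ σ ∈ Y, ¬ (u ∈ σ ∧ v ∈ σ)) :
    (Y.filter fun σ => (u ∈ σ ∨ v ∈ σ) ∧ a ∈ σ).card =
      (Y.filter fun σ => u ∈ σ ∧ a ∈ σ).card + (Y.filter fun σ => v ∈ σ ∧ a ∈ σ).card := by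
  rw [← card_union_of_disjoint]
  · congr 1
    ext σ; simp only [mem_filter, mem_union]; tauto
  · rw [disjoint_left]
    intro σ h1 h2
    simp only [mem_filter] at h1 h2
    exact hY σ h1.1 ⟨h1.2.1, h2.2.1⟩

theorem push_cyc {u v : V} (huv : u ≠ v) {Z : Finset (Finset V)} (hZ : IsCyc Z) :
    IsCyc (push u v Z) := by
  refine ⟨fun σ hσ => (mem_filter.1 hσ).2.1, ?_⟩
  set Y := Z.filter fun σ => ¬ (u ∈ σ ∧ v ∈ σ) with hYdef
  have hY : ∀ σ ∈ Y, ¬ (u ∈ σ ∧ v ∈ σ) := fun σ hσ => (mem_filter.1 hσ).2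
  -- count via the triangles not containing both ends
  have key : ∀ P : Finset V → Prop, ∀ _ : DecidablePred P,
      (Even ((push u v Z).filter P).card ↔ Even (Y.filter fun σ => P (σ.image (con u v))).card) := by
    intro P _
    have h := Finset.card_eq_sum_card_fiberwise
      (s := Y.filter fun σ => P (σ.image (con u v)))
      (t := (Y.image (fun σ => σ.image (con u v))).filter P) (f := fun σ => σ.image (con u v)) (by
        intro σ hσ
        simp only [coe_filter, Set.mem_ofPred_eq] at hσ ⊢
        exact ⟨mem_image_of_mem _ hσ.1, hσ.2⟩)
    rw [h, Finset.even_sum_iff_even_card_odd]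
    have : (push u v Z).filter P = {i ∈ (Y.image (fun σ => σ.image (con u v))).filter P |
        Odd #{a ∈ Y.filter (fun σ => P (σ.image (con u v))) | a.image (con u v) = i}} := by
      ext σ'
      have hf : σ'.card = 3 → P σ' → {a ∈ Y.filter (fun σ => P (σ.image (con u v))) | a.image (con u v) = σ'}
          = Z.filter fun σ => σ.image (con u v) = σ' := by
        intro hc hP
        ext σ
        simp only [mem_filter, hYdef]
        constructor
        · rintro ⟨⟨⟨h1, _⟩, _⟩, h2⟩; exact ⟨h1, h2⟩
        · rintro ⟨h1, h2⟩
          refine ⟨⟨⟨h1, fun h3 => ?_⟩, by rw [h2]; exact hP⟩, h2⟩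
          have := card_con' huv h3
          rw [h2, hc, hZ.1 σ h1] at this
          omega
      constructor
      · intro h
        rw [push, filter_filter, mem_filter, mem_image] at h
        obtain ⟨⟨σ, hσ, rfl⟩, ⟨h2, h3⟩, h4⟩ := h
        rw [mem_filter, mem_filter, mem_image, hf h2 h4]
        refine ⟨⟨⟨σ, ?_, rfl⟩, h4⟩, h3⟩
        rw [hYdef, mem_filter]
        refine ⟨hσ, fun h5 => ?_⟩
        have := card_con' huv h5
        rw [h2, hZ.1 σ hσ] at this
        omega
      · intro h
        rw [mem_filter, mem_filter, mem_image] at h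
        obtain ⟨⟨⟨σ, hσ, rfl⟩, h4⟩, h3⟩ := h
        have hc : (σ.image (con u v)).card = 3 := by
          rw [card_con (hY σ hσ)]; exact hZ.1 σ (mem_filter.1 hσ).1
        rw [hf hc h4] at h3
        rw [mem_filter, push, mem_filter, mem_image]
        exact ⟨⟨⟨σ, (mem_filter.1 hσ).1, rfl⟩, hc, h3⟩, h4⟩
    rw [this]
  -- edges at `u`
  have hu : ∀ a, a ≠ u → a ≠ v → Even (Y.filter fun σ => (u ∈ σ ∨ v ∈ σ) ∧ a ∈ σ).card := by
    intro a hau hav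
    have e1 := hZ.2 u a hau.symm
    have e2 := hZ.2 v a hav.symm
    rw [even_aux Y u v a hY]
    have f1 : ∀ w, (w = u ∨ w = v) → (Z.filter fun σ => w ∈ σ ∧ a ∈ σ).card = (Y.filter fun σ => w ∈ σ ∧ a ∈ σ).card
        + (Z.filter fun σ => (u ∈ σ ∧ v ∈ σ) ∧ a ∈ σ).card := by
      intro w hw
      rw [← card_union_of_disjoint]
      · congr 1
        ext σ; simp only [mem_filter, mem_union, hYdef]
        rcases hw with rfl | rfl <;> tauto
      · rw [disjoint_left]
        intro σ h1 h2
        simp only [mem_filter, hYdef] at h1 h2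
        exact h1.1.2 h2.2.1
    rw [f1 u (Or.inl rfl)] at e1
    rw [f1 v (Or.inr rfl)] at e2
    rw [Nat.even_add] at *
    tauto
  intro a b hab
  rw [key]
  simp only [mem_con]
  by_cases hav : a = v
  · subst hav
    rw [filter_false_of_mem]
    · simp
    · intro σ _; simp [huv.symm]
  by_cases hbv : b = v
  · subst hbv
    rw [filter_false_of_mem]
    · simp
    · intro σ _; simp [huv.symm]
  by_cases hau : a = u
  · have := hu b (by rw [← hau]; exact hab.symm) hbv
    convert this using 3
    subst hau; simp [hbv, hav, hab.symm]
  by_cases hbu : b = u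
  · have := hu a (by rw [← hbu]; exact hab) hav
    convert this using 3
    subst hbu; simp [hbv, hav, hab]; tauto
  · have := hZ.2 a b hab
    convert this using 2
    ext σ
    simp only [mem_filter, hYdef, hau, hbu]
    constructor
    · simp; tauto
    · rintro ⟨h1, h2, h3⟩
      simp only [h2, h3, h1]
      simp only [true_and, and_true, false_and, or_false, not_and, ne_eq, not_false_eq_true, hav, hbv]
      intro h4 h5
      have : ({a, b, u, v} : Finset V) ⊆ σ := by
        intro w; simp only [mem_insert, mem_singleton]; rintro (rfl | rfl | rfl | rfl) <;> assumption
      have h6 := card_le_card this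
      rw [hZ.1 σ h1, card_eq_of_equiv_fin (n := 4)] at h6
      · omega
      · exact (Fintype.equivFinOfCardEq (by rw [Fintype.card_coe]; rw [card_insert_of_notMem, card_insert_of_notMem, card_pair huv] <;> simp [*]))

end chains

section split
variable [DecidableEq V]
set_option linter.unusedSectionVars false

theorem inj4 {a b c d : V} (h1 : a ≠ b) (h2 : a ≠ c) (h3 : a ≠ d) (h4 : b ≠ c) (h5 : b ≠ d)
    (h6 : c ≠ d) : Function.Injective ![a, b, c, d] := by
  intro i j hij
  fin_cases i <;> fin_cases j <;> simp_all

theorem gen4 {a b c d : V} (h1 : a ≠ b) (h2 : a ≠ c) (h3 : a ≠ d) (h4 : b ≠ c) (h5 : b ≠ d)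
    (h6 : c ≠ d) : ∀ᶠ p in gen V, LinearIndependent ℚ (fun k => p (![a, b, c, d] k)) :=
  gen_indep _ (inj4 h1 h2 h3 h4 h5 h6)

theorem clique_triv {E : V → V → Prop} {p x : V → Fin 4 → ℚ} (hx : Mot E p x) {B : Fin 4 → V}
    (hB : LinearIndependent ℚ (fun k => p (B k))) (hE : ∀ k l, E (B k) (B l)) :
    ∃ A : Matrix (Fin 4) (Fin 4) ℚ, A.IsSymm ∧ ∀ k, x (B k) = A *ᵥ p (B k) :=
  clique_mat (b := fun k => p (B k)) (y := fun k => x (B k)) hB (fun k l => hx _ _ (hE k l))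

/-- combinatorial part: two common neighbours -/
theorem two_common {Z Z' : Finset (Finset V)} {u v : V} (huv : u ≠ v) (hZ : MinCyc Z)
    {σ0 : Finset V} (hσ0 : σ0 ∈ Z) (hu0 : u ∈ σ0) (hv0 : v ∈ σ0)
    (hZ' : MinCyc Z') (hsub : Z' ⊆ push u v Z) {τ : Finset V} (hτ : τ ∈ Z)
    (hτ' : τ.image (con u v) ∈ Z') :
    ∃ a b, a ≠ b ∧ a ≠ u ∧ a ≠ v ∧ b ≠ u ∧ b ≠ v ∧
      ∀ w, (w = u ∨ w = v) → ∀ c, (c = a ∨ c = b) → ∃ σ ∈ Z, σ.image (con u v) ∈ Z' ∧ w ∈ σ ∧ c ∈ σ := by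
  set Y := Z.filter fun σ => σ.image (con u v) ∈ Z' with hYdef
  have hodd : ∀ σ' ∈ Z', Odd (Z.filter fun σ => σ.image (con u v) = σ').card := fun σ' h =>
    (mem_filter.1 (hsub h)).2.2
  have hY3 : ∀ σ ∈ Y, σ.card = 3 := fun σ h => hZ.1.1 σ (mem_filter.1 h).1
  have hYuv : ∀ σ ∈ Y, ¬ (u ∈ σ ∧ v ∈ σ) := by
    intro σ hσ h
    rw [mem_filter] at hσ
    have h1 := card_con' huv h
    have h2 := (mem_filter.1 (hsub hσ.2)).2.1
    rw [hZ.1.1 σ hσ.1, h2] at h1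
    omega
  have hpar : ∀ a b, a ≠ b →
      Even (Y.filter fun σ => a ∈ σ.image (con u v) ∧ b ∈ σ.image (con u v)).card := by
    intro a b hab
    have := (fibre_parity Z Z' hodd (fun σ => a ∈ σ ∧ b ∈ σ)).2 (hZ'.1.2 a b hab)
    rw [hYdef, filter_filter]
    exact this
  have hsame : ∀ a, a ≠ u → a ≠ v → (Even (Y.filter fun σ => u ∈ σ ∧ a ∈ σ).card ↔
      Even (Y.filter fun σ => v ∈ σ ∧ a ∈ σ).card) := by
    intro a hau hav
    have := hpar u a hau.symm
    simp only [mem_con] at this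
    have e := even_aux Y u v a hYuv
    have e2 : (Y.filter fun σ => (u ≠ v ∧ u ∈ σ ∨ True ∧ v ∈ σ) ∧ (a ≠ v ∧ a ∈ σ ∨ a = u ∧ v ∈ σ))
      = (Y.filter fun σ => (u ∈ σ ∨ v ∈ σ) ∧ a ∈ σ) := by
      ext σ; simp [huv, hau, hav]
    rw [e2, e, Nat.even_add] at this
    exact this
  have hodd_ex : ∃ a, a ≠ u ∧ a ≠ v ∧ ¬ Even (Y.filter fun σ => u ∈ σ ∧ a ∈ σ).card := by
    by_contra hcon
    push Not at hcon
    have hcyc : IsCyc Y := by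
      refine ⟨hY3, ?_⟩
      have hz : Even (Y.filter fun σ => u ∈ σ ∧ v ∈ σ).card := by
        rw [filter_false_of_mem hYuv]; simp
      have hcomm : ∀ a b, (Y.filter fun σ => a ∈ σ ∧ b ∈ σ) = (Y.filter fun σ => b ∈ σ ∧ a ∈ σ) := by
        intro a b; ext σ; simp only [mem_filter]; rw [and_comm (a := a ∈ σ)]
      have hU : ∀ b, b ≠ u → Even (Y.filter fun σ => u ∈ σ ∧ b ∈ σ).card := by
        intro b hb
        by_cases hbv : b = v
        · rw [hbv]; exact hz
        · exact hcon b hb hbv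
      have hV : ∀ b, b ≠ v → Even (Y.filter fun σ => v ∈ σ ∧ b ∈ σ).card := by
        intro b hb
        by_cases hbu : b = u
        · rw [hbu, hcomm]; exact hz
        · exact (hsame b hbu hb).1 (hcon b hbu hb)
      intro a b hab
      by_cases hau : a = u
      · rw [hau]; exact hU b (by rw [← hau]; exact hab.symm)
      by_cases hbu : b = u
      · rw [hbu, hcomm]; exact hU a hau
      by_cases hav : a = v
      · rw [hav]; exact hV b (by rw [← hav]; exact hab.symm)
      by_cases hbv : b = v
      · rw [hbv, hcomm]; exact hV a hav
      have := hpar a b hab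
      simpa only [mem_con, hau, hbu, hav, hbv, ne_eq, not_false_eq_true, true_and, false_and, or_false] using this
    have : Y = Z := hZ.2.2 Y (filter_subset _ _) hcyc ⟨τ, by rw [hYdef, mem_filter]; exact ⟨hτ, hτ'⟩⟩
    rw [← this] at hσ0
    exact hYuv σ0 hσ0 ⟨hu0, hv0⟩
  obtain ⟨a, hau, hav, ha⟩ := hodd_ex
  have : ∃ b, b ≠ u ∧ b ≠ a ∧ ¬ Even (Y.filter fun σ => u ∈ σ ∧ b ∈ σ).card := by
    by_contra hcon
    push Not at hcon
    exact ha (parity_vertex hY3 u a hau.symm hcon)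
  obtain ⟨b, hbu, hba, hb⟩ := this
  have hbv : b ≠ v := by
    rintro rfl
    apply hb
    rw [filter_false_of_mem hYuv]; simp
  refine ⟨a, b, hba.symm, hau, hav, hbu, hbv, ?_⟩
  have hfin : ∀ w c, ¬ Even (Y.filter fun σ => w ∈ σ ∧ c ∈ σ).card →
      ∃ σ ∈ Z, σ.image (con u v) ∈ Z' ∧ w ∈ σ ∧ c ∈ σ := by
    intro w c h
    have : (Y.filter fun σ => w ∈ σ ∧ c ∈ σ).Nonempty := by
      rw [nonempty_iff_ne_empty]
      intro h'
      rw [h'] at h; simp at h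
    obtain ⟨σ, hσ⟩ := this
    simp only [mem_filter, hYdef] at hσ
    exact ⟨σ, hσ.1.1, hσ.1.2, hσ.2⟩
  rintro w (rfl | rfl) c (rfl | rfl)
  · exact hfin _ _ ha
  · exact hfin _ _ hb
  · exact hfin _ _ (fun h => ha ((hsame _ hau hav).2 h))
  · exact hfin _ _ (fun h => hb ((hsame _ hbu hbv).2 h))

/-- vertex splitting -/
theorem split_rig {Z Z' : Finset (Finset V)} {u v t : V} (huv : u ≠ v) (hZ : MinCyc Z)
    (ht : t ∉ vert Z)
    {σ0 : Finset V} (hσ0 : σ0 ∈ Z) (hu0 : u ∈ σ0) (hv0 : v ∈ σ0)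
    (hZ' : MinCyc Z') (hsub : Z' ⊆ push u v Z) {τ : Finset V} (hτ : τ ∈ Z)
    (hτ' : τ.image (con u v) ∈ Z')
    (IH : ∀ᶠ p in gen V, Rig (Et t Z') (insert t (vert Z')) p) :
    ∀ᶠ p in gen V, Rig (Et t Z) (insert u (insert v (insert t τ))) p := by
  obtain ⟨a, b, hab, hau, hav, hbu, hbv, hcom⟩ := two_common huv hZ hσ0 hu0 hv0 hZ' hsub hτ hτ'
  have htne : ∀ σ ∈ Z, ∀ w ∈ σ, w ≠ t := by
    rintro σ hσ w hw rfl
    exact ht (mem_vert.2 ⟨σ, hσ, hw⟩)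
  set Y := Z.filter fun σ => σ.image (con u v) ∈ Z' with hYdef
  have hvY : ∀ w c, (w = u ∨ w = v) → (c = a ∨ c = b) → w ∈ vert Y ∧ c ∈ vert Y := by
    intro w c hw hc
    obtain ⟨σ, h1, h2, h3, h4⟩ := hcom w hw c hc
    have : σ ∈ Y := mem_filter.2 ⟨h1, h2⟩
    exact ⟨mem_vert.2 ⟨σ, this, h3⟩, mem_vert.2 ⟨σ, this, h4⟩⟩
  have huY := (hvY u a (Or.inl rfl) (Or.inl rfl)).1
  have hvY' := (hvY v a (Or.inr rfl) (Or.inl rfl)).1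
  -- the graph of the piece
  let E : V → V → Prop := fun i j => Et t Z i j ∧ i ∈ insert t (vert Y) ∧ j ∈ insert t (vert Y)
  have hτ3 : τ.card = 3 := hZ.1.1 τ hτ
  obtain ⟨c1, c2, c3, h12, h13, h23, hτe⟩ := card_eq_three.1 hτ3
  have hτ3' : (τ.image (con u v)).card = 3 := hZ'.1.1 _ hτ'
  have hinj : Set.InjOn (con u v) τ := by
    apply card_image_iff.1
    rw [hτ3, hτ3']
  have hc1 : c1 ∈ τ := by simp [hτe]
  have hc2 : c2 ∈ τ := by simp [hτe]
  have hc3 : c3 ∈ τ := by simp [hτe]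
  have htu : u ≠ t := htne σ0 hσ0 u hu0
  have htv : v ≠ t := htne σ0 hσ0 v hv0
  have hcont : ∀ w, w ≠ t → con u v w ≠ t := by
    intro w hw; unfold con; split_ifs <;> assumption
  have hat : a ≠ t := by
    obtain ⟨σ, h1, h2, h3, h4⟩ := hcom u (Or.inl rfl) a (Or.inl rfl)
    exact htne σ h1 a h4
  have hbt : b ≠ t := by
    obtain ⟨σ, h1, h2, h3, h4⟩ := hcom u (Or.inl rfl) b (Or.inr rfl)
    exact htne σ h1 b h4
  have hτY : τ ∈ Y := mem_filter.2 ⟨hτ, hτ'⟩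
  have hcont_t : con u v t = t := con_ne _ _ htv.symm
  -- choose a generic configuration and specialise
  have hgen := (IH.and (gen4 hau.symm hbu.symm htu hab hat hbt)).and
    (gen4 (a := con u v c1) (b := con u v c2) (c := con u v c3) (d := t)
      (fun h => h12 (hinj hc1 hc2 h)) (fun h => h13 (hinj hc1 hc3 h)) (hcont _ (htne τ hτ _ hc1))
      (fun h => h23 (hinj hc2 hc3 h)) (hcont _ (htne τ hτ _ hc2)) (hcont _ (htne τ hτ _ hc3)))
  obtain ⟨p, ⟨hp1, hp2⟩, hp3⟩ := hgen.exists
  have hvertZ' : ∀ w ∈ vert Y, con u v w ∈ vert Z' := by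
    intro w hw
    obtain ⟨σ, h1, h2⟩ := mem_vert.1 hw
    exact mem_vert.2 ⟨_, (mem_filter.1 h1).2, mem_image_of_mem _ h2⟩
  have hR : Rig E (insert t (vert Y)) (fun w => p (con u v w)) := by
    intro x hx
    have hEuv : E u v := ⟨⟨σ0, hσ0, by simp [hu0], by simp [hv0]⟩, by simp [huY], by simp [hvY']⟩
    have hEt : ∀ w ∈ vert Y, E w t := by
      intro w hw
      obtain ⟨σ, h1, h2⟩ := mem_vert.1 hw
      exact ⟨⟨σ, (mem_filter.1 h1).1, by simp [h2], by simp⟩, by simp [hw], by simp⟩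
    have hEc : ∀ w c, (w = u ∨ w = v) → (c = a ∨ c = b) → E w c := by
      intro w c hw hc
      obtain ⟨σ, h1, h2, h3, h4⟩ := hcom w hw c hc
      exact ⟨⟨σ, h1, by simp [h3], by simp [h4]⟩, by simp [hvY w c hw hc], by simp [hvY w c hw hc]⟩
    have hpc : ∀ w, w ≠ v → p (con u v w) = p w := fun w hw => by rw [con_ne _ _ hw]
    have hcc : ∀ c, (c = a ∨ c = b ∨ c = t) → p c ⬝ᵥ (x u - x v) = 0 := by
      intro c hc
      have hcv : c ≠ v := by rcases hc with rfl | rfl | rfl <;> [exact hav; exact hbv; exact htv.symm]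
      have h1 : E u c := by
        rcases hc with rfl | rfl | rfl
        · exact hEc _ _ (Or.inl rfl) (Or.inl rfl)
        · exact hEc _ _ (Or.inl rfl) (Or.inr rfl)
        · exact hEt _ huY
      have h2 : E v c := by
        rcases hc with rfl | rfl | rfl
        · exact hEc _ _ (Or.inr rfl) (Or.inl rfl)
        · exact hEc _ _ (Or.inr rfl) (Or.inr rfl)
        · exact hEt _ hvY'
      have e1 := hx _ _ h1
      have e2 := hx _ _ h2
      simp only [con_self, hpc c hcv, hpc u huv] at e1 e2
      rw [dotProduct_sub, e1, e2, sub_self]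
    have hxuv : x u = x v := by
      rw [← sub_eq_zero]
      apply dot_zero hp2
      intro k
      fin_cases k
      · have := hx _ _ hEuv
        simp only [con_self, hpc u huv] at this
        simp [dotProduct_sub, this]
      · exact hcc a (by simp)
      · exact hcc b (by simp)
      · exact hcc t (by simp)
    have hxcon : ∀ w, x (con u v w) = x w := by
      intro w; unfold con; split_ifs with h
      · rw [h, hxuv]
      · rfl
    have hmot : Mot (Et t Z') p x := by
      rintro i j ⟨σ', hσ', hi, hj⟩
      have hs := hsub hσ'
      rw [push, mem_filter, mem_image] at hs
      obtain ⟨⟨σ, hσ, rfl⟩, _⟩ := hs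
      have hσY : σ ∈ Y := mem_filter.2 ⟨hσ, hσ'⟩
      have hlift : ∀ i ∈ insert t (σ.image (con u v)), ∃ i0 ∈ insert t σ, con u v i0 = i := by
        intro i hi
        rw [mem_insert, mem_image] at hi
        rcases hi with rfl | ⟨i0, h1, h2⟩
        · exact ⟨_, mem_insert_self _ _, hcont_t⟩
        · exact ⟨i0, mem_insert_of_mem h1, h2⟩
      obtain ⟨i0, hi0, rfl⟩ := hlift i hi
      obtain ⟨j0, hj0, rfl⟩ := hlift j hj
      have hin : ∀ w ∈ insert t σ, w ∈ insert t (vert Y) := by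
        intro w hw
        rw [mem_insert] at hw ⊢
        exact hw.imp id (fun h => mem_vert.2 ⟨σ, hσY, h⟩)
      have := hx i0 j0 ⟨⟨σ, hσ, hi0, hj0⟩, hin _ hi0, hin _ hj0⟩
      rw [hxcon, hxcon]
      exact this
    obtain ⟨A, hA, hA'⟩ := hp1 x hmot
    refine ⟨A, hA, fun w hw => ?_⟩
    rw [← hxcon w]
    apply hA'
    rw [mem_insert] at hw
    rcases hw with rfl | hw
    · rw [hcont_t]; simp
    · exact mem_insert_of_mem (hvertZ' w hw)
  have hBmem : ∀ k, ![c1, c2, c3, t] k ∈ insert t τ := by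
    intro k; fin_cases k <;> simp [hc1, hc2, hc3]
  have hsubY : ∀ w ∈ insert t τ, w ∈ insert t (vert Y) := by
    intro w hw
    rw [mem_insert] at hw ⊢
    exact hw.imp id (fun h => mem_vert.2 ⟨τ, hτY, h⟩)
  have hfinal := semicont E (insert t (vert Y)) (fun i j h => h.2) ![c1, c2, c3, t]
    (fun k => hsubY _ (hBmem k))
    (fun k l => ⟨⟨τ, hτ, hBmem k, hBmem l⟩, hsubY _ (hBmem k), hsubY _ (hBmem l)⟩)
    (fun w => p (con u v w)) (by
      convert hp3 using 2 with k
      fin_cases k <;> simp [hcont_t]) hR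
  filter_upwards [hfinal] with q hq x hx
  obtain ⟨A, hA, hA'⟩ := hq x (fun i j h => hx i j h.1)
  refine ⟨A, hA, fun i hi => hA' i ?_⟩
  rw [mem_insert, mem_insert] at hi
  rcases hi with rfl | rfl | hi
  · simp [huY]
  · simp [hvY']
  · exact hsubY _ hi

theorem k5_rig {Z : Finset (Finset V)} {u v a b t : V} (huv : u ≠ v) (hua : u ≠ a) (hut : u ≠ t)
    (hva : v ≠ a) (hvt : v ≠ t) (hat : a ≠ t) {σ0 σu σv : Finset V} (hσ0 : σ0 ∈ Z) (hu0 : u ∈ σ0)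
    (hv0 : v ∈ σ0) (hσu : σu ∈ Z) (hu1 : u ∈ σu) (hu2 : a ∈ σu) (hu3 : b ∈ σu)
    (hσv : σv ∈ Z) (hv1 : v ∈ σv) (hv2 : a ∈ σv) (hv3 : b ∈ σv) :
    ∀ᶠ p in gen V, Rig (Et t Z) {u, v, a, b, t} p := by
  have Esymm : ∀ i j, Et t Z i j → Et t Z j i := fun i j ⟨σ, h, h1, h2⟩ => ⟨σ, h, h2, h1⟩
  have h1 : ∀ i j, (i = u ∨ i = a ∨ i = b ∨ i = t) → (j = u ∨ j = a ∨ j = b ∨ j = t) → Et t Z i j := by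
    have : ∀ i, (i = u ∨ i = a ∨ i = b ∨ i = t) → i ∈ insert t σu := by
      rintro i (rfl | rfl | rfl | rfl)
      · exact mem_insert_of_mem hu1
      · exact mem_insert_of_mem hu2
      · exact mem_insert_of_mem hu3
      · exact mem_insert_self _ _
    exact fun i j hi hj => ⟨σu, hσu, this i hi, this j hj⟩
  have h2 : ∀ i j, (i = v ∨ i = a ∨ i = b ∨ i = t) → (j = v ∨ j = a ∨ j = b ∨ j = t) → Et t Z i j := by
    have : ∀ i, (i = v ∨ i = a ∨ i = b ∨ i = t) → i ∈ insert t σv := by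
      rintro i (rfl | rfl | rfl | rfl)
      · exact mem_insert_of_mem hv1
      · exact mem_insert_of_mem hv2
      · exact mem_insert_of_mem hv3
      · exact mem_insert_self _ _
    exact fun i j hi hj => ⟨σv, hσv, this i hi, this j hj⟩
  have h3 : Et t Z u v := ⟨σ0, hσ0, mem_insert_of_mem hu0, mem_insert_of_mem hv0⟩
  have h4 : Et t Z v u := Esymm _ _ h3
  have hBE : ∀ k l, Et t Z (![u, v, a, t] k) (![u, v, a, t] l) := by
    intro k l
    fin_cases k <;> fin_cases l
    · exact h1 u u (by simp) (by simp)
    · exact h3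
    · exact h1 u a (by simp) (by simp)
    · exact h1 u t (by simp) (by simp)
    · exact h4
    · exact h2 v v (by simp) (by simp)
    · exact h2 v a (by simp) (by simp)
    · exact h2 v t (by simp) (by simp)
    · exact h1 a u (by simp) (by simp)
    · exact h2 a v (by simp) (by simp)
    · exact h1 a a (by simp) (by simp)
    · exact h1 a t (by simp) (by simp)
    · exact h1 t u (by simp) (by simp)
    · exact h2 t v (by simp) (by simp)
    · exact h1 t a (by simp) (by simp)
    · exact h1 t t (by simp) (by simp)
  have hbE : ∀ k, Et t Z b (![u, v, a, t] k) := by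
    intro k
    fin_cases k
    · exact h1 b u (by simp) (by simp)
    · exact h2 b v (by simp) (by simp)
    · exact h1 b a (by simp) (by simp)
    · exact h1 b t (by simp) (by simp)
  filter_upwards [gen4 huv hua hut hva hvt hat] with p hp x hx
  obtain ⟨A, hA, hA'⟩ := clique_triv hx hp hBE
  have hxb : x b = A *ᵥ p b := by
    rw [← sub_eq_zero]
    apply dot_zero hp
    intro k
    have e1 := hx _ _ (hbE k)
    rw [dotProduct_sub, e1, hA' k, symm_dot hA, sub_self]
  refine ⟨A, hA, fun i hi => ?_⟩
  simp only [mem_insert, mem_singleton] at hi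
  rcases hi with rfl | rfl | rfl | rfl | rfl
  · exact hA' 0
  · exact hA' 1
  · exact hA' 2
  · exact hxb
  · exact hA' 3

set_option maxHeartbeats 800000 in
theorem cone_rig (n : ℕ) : ∀ (Z : Finset (Finset V)) (t : V), MinCyc Z → t ∉ vert Z →
    (vert Z).card ≤ n → ∀ᶠ p in gen V, Rig (Et t Z) (insert t (vert Z)) p := by
  induction n with
  | zero =>
    intro Z t hZ _ hc
    obtain ⟨σ, hσ⟩ := hZ.2.1
    have h3 := hZ.1.1 σ hσ
    have : σ ⊆ vert Z := fun w hw => mem_vert.2 ⟨σ, hσ, hw⟩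
    have := card_le_card this
    omega
  | succ n ih =>
    intro Z t hZ ht hc
    obtain ⟨σ0, hσ0⟩ := hZ.2.1
    obtain ⟨u, v, w0, huv, huw, hvw, hσe⟩ := card_eq_three.1 (hZ.1.1 σ0 hσ0)
    have hu0 : u ∈ σ0 := by simp [hσe]
    have hv0 : v ∈ σ0 := by simp [hσe]
    have htne : ∀ σ ∈ Z, ∀ w ∈ σ, w ≠ t := by
      rintro σ hσ w hw rfl
      exact ht (mem_vert.2 ⟨σ, hσ, hw⟩)
    have htu : u ≠ t := htne σ0 hσ0 u hu0
    have htv : v ≠ t := htne σ0 hσ0 v hv0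
    -- each triangle together with u, v, t
    have step : ∀ τ ∈ Z, ∀ᶠ p in gen V, Rig (Et t Z) (insert u (insert v (insert t τ))) p := by
      intro τ hτ
      have hτ3 := hZ.1.1 τ hτ
      by_cases h1 : u ∈ τ ∧ v ∈ τ
      · obtain ⟨c1, c2, c3, h12, h13, h23, hτe⟩ := card_eq_three.1 hτ3
        have hc1 : c1 ∈ τ := by simp [hτe]
        have hc2 : c2 ∈ τ := by simp [hτe]
        have hc3 : c3 ∈ τ := by simp [hτe]
        have hBmem : ∀ k, ![c1, c2, c3, t] k ∈ insert t τ := by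
          intro k; fin_cases k <;> simp [hc1, hc2, hc3]
        filter_upwards [gen4 h12 h13 (htne τ hτ _ hc1) h23 (htne τ hτ _ hc2) (htne τ hτ _ hc3)]
          with p hp x hx
        obtain ⟨A, hA, hA'⟩ := clique_triv hx hp (fun k l => ⟨τ, hτ, hBmem k, hBmem l⟩)
        refine ⟨A, hA, fun i hi => ?_⟩
        have hi' : i = c1 ∨ i = c2 ∨ i = c3 ∨ i = t := by
          rw [insert_eq_of_mem (a := v) (by simp [h1.2]), insert_eq_of_mem (a := u) (by simp [h1.1]), hτe] at hi
          simp only [mem_insert, mem_singleton] at hi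
          clear * - hi
          tauto
        rcases hi' with rfl | rfl | rfl | rfl
        · exact hA' 0
        · exact hA' 1
        · exact hA' 2
        · exact hA' 3
      by_cases h2 : τ.image (con u v) ∈ push u v Z
      · obtain ⟨Z', hsub, hZ', hτ'⟩ := exists_min (push_cyc huv hZ.1) h2
        have hvZ' : vert Z' ⊆ (vert Z).erase v := by
          intro w hw
          obtain ⟨σ', h3, h4⟩ := mem_vert.1 hw
          have hs := hsub h3
          rw [push, mem_filter, mem_image] at hs
          obtain ⟨⟨σ, hσ, rfl⟩, _⟩ := hs
          rw [mem_con] at h4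
          rw [mem_erase, mem_vert]
          rcases h4 with h4 | ⟨rfl, h4⟩
          · exact ⟨h4.1, σ, hσ, h4.2⟩
          · exact ⟨huv, σ0, hσ0, hu0⟩
        have hcard : (vert Z').card ≤ n := by
          have h5 := card_le_card hvZ'
          have hvm : v ∈ vert Z := mem_vert.2 ⟨σ0, hσ0, hv0⟩
          rw [card_erase_of_mem hvm] at h5
          omega
        exact split_rig huv hZ ht hσ0 hu0 hv0 hZ' hsub hτ hτ'
          (ih Z' t hZ' (fun h => ht (mem_of_mem_erase (hvZ' h))) hcard)
      · -- cancelled triangle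
        have : ∃ τ2 ∈ Z, τ2 ≠ τ ∧ τ2.image (con u v) = τ.image (con u v) := by
          by_contra hcon
          push Not at hcon
          apply h2
          rw [push, mem_filter]
          refine ⟨mem_image_of_mem _ hτ, by rw [card_con h1, hτ3], ?_⟩
          have : (Z.filter fun σ => σ.image (con u v) = τ.image (con u v)) = {τ} := by
            ext σ
            simp only [mem_filter, mem_singleton]
            constructor
            · rintro ⟨h3, h4⟩; by_contra h5; exact hcon σ h3 h5 h4
            · rintro rfl; exact ⟨hτ, rfl⟩
          rw [this]; simp
        obtain ⟨τ2, hτ2, hne, him⟩ := this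
        have hτ23 := hZ.1.1 τ2 hτ2
        have h12 : ¬ (u ∈ τ2 ∧ v ∈ τ2) := by
          intro h
          have := card_con' huv h
          rw [him, card_con h1] at this
          omega
        have hmem : ∀ w, w ≠ u → w ≠ v → (w ∈ τ ↔ w ∈ τ2) := by
          intro w hwu hwv
          have := congrArg (fun s => w ∈ s) him
          simp only [mem_con, eq_iff_iff] at this
          simpa [hwu, hwv] using this.symm
        have hmemu : (u ∈ τ ∨ v ∈ τ) ↔ (u ∈ τ2 ∨ v ∈ τ2) := by
          have := congrArg (fun s => u ∈ s) him
          simp only [mem_con, eq_iff_iff] at this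
          simpa [huv] using this.symm
        have hopp : (u ∈ τ ∧ v ∈ τ2) ∨ (v ∈ τ ∧ u ∈ τ2) := by
          by_contra hcon
          apply hne
          ext w
          by_cases hwu : w = u
          · subst hwu; clear * - h1 h12 hmemu hcon; tauto
          by_cases hwv : w = v
          · subst hwv; clear * - h1 h12 hmemu hcon; tauto
          exact (hmem w hwu hwv).symm
        -- the two further vertices
        have : ∃ a b, a ≠ b ∧ a ≠ u ∧ a ≠ v ∧ b ≠ u ∧ b ≠ v ∧ a ∈ τ ∧ b ∈ τ ∧
            ∀ w ∈ τ, w = u ∨ w = v ∨ w = a ∨ w = b := by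
          obtain ⟨z, hz, hzuv, hzo⟩ : ∃ z ∈ τ, (z = u ∨ z = v) ∧ ∀ w ∈ τ, w ≠ z → w ≠ u ∧ w ≠ v := by
            rcases hopp with h | h
            · exact ⟨u, h.1, Or.inl rfl, fun w hw hwu => ⟨hwu, fun hh => h1 ⟨h.1, hh ▸ hw⟩⟩⟩
            · exact ⟨v, h.1, Or.inr rfl, fun w hw hwv => ⟨fun hh => h1 ⟨hh ▸ hw, h.1⟩, hwv⟩⟩
          have hc2 : (τ.erase z).card = 2 := by rw [card_erase_of_mem hz, hτ3]
          obtain ⟨a, b, hab, he⟩ := card_eq_two.1 hc2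
          have ha : a ∈ τ.erase z := by simp [he]
          have hb : b ∈ τ.erase z := by simp [he]
          rw [mem_erase] at ha hb
          refine ⟨a, b, hab, (hzo a ha.2 ha.1).1, (hzo a ha.2 ha.1).2, (hzo b hb.2 hb.1).1, (hzo b hb.2 hb.1).2,
            ha.2, hb.2, ?_⟩
          intro w hw
          by_cases hwz : w = z
          · subst hwz; exact hzuv.elim Or.inl (fun h => Or.inr (Or.inl h))
          · have : w ∈ τ.erase z := mem_erase.2 ⟨hwz, hw⟩
            rw [he] at this
            simp only [mem_insert, mem_singleton] at this
            exact Or.inr (Or.inr this)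
        obtain ⟨a, b, hab, hau, hav, hbu, hbv, ha, hb, hall⟩ := this
        have ha2 := (hmem a hau hav).1 ha
        have hb2 := (hmem b hbu hbv).1 hb
        have hσu : ∃ σ ∈ Z, u ∈ σ ∧ a ∈ σ ∧ b ∈ σ := by
          rcases hopp with h | h
          · exact ⟨τ, hτ, h.1, ha, hb⟩
          · exact ⟨τ2, hτ2, h.2, ha2, hb2⟩
        have hσv : ∃ σ ∈ Z, v ∈ σ ∧ a ∈ σ ∧ b ∈ σ := by
          rcases hopp with h | h
          · exact ⟨τ2, hτ2, h.2, ha2, hb2⟩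
          · exact ⟨τ, hτ, h.1, ha, hb⟩
        obtain ⟨σu, hσu, hu1, hu2, hu3⟩ := hσu
        obtain ⟨σv, hσv, hv1, hv2, hv3⟩ := hσv
        filter_upwards [k5_rig huv hau.symm htu hav.symm htv (htne τ hτ a ha) hσ0 hu0 hv0 hσu hu1 hu2 hu3
          hσv hv1 hv2 hv3] with p hp x hx
        obtain ⟨A, hA, hA'⟩ := hp x hx
        refine ⟨A, hA, fun i hi => ?_⟩
        have hi' : i = u ∨ i = v ∨ i = a ∨ i = b ∨ i = t := by
          simp only [mem_insert] at hi
          rcases hi with h | h | h | h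
          · exact Or.inl h
          · exact Or.inr (Or.inl h)
          · exact Or.inr (Or.inr (Or.inr (Or.inr h)))
          · rcases hall i h with h | h | h | h
            · exact Or.inl h
            · exact Or.inr (Or.inl h)
            · exact Or.inr (Or.inr (Or.inl h))
            · exact Or.inr (Or.inr (Or.inr (Or.inl h)))
        exact hA' i (by simpa only [mem_insert, mem_singleton] using hi')
    have hgen1 : ∀ᶠ p in gen V, ∀ τ ∈ Z, Rig (Et t Z) (insert u (insert v (insert t τ))) p :=
      (Filter.eventually_all_finset Z).2 step
    have hgen2 : ∀ᶠ p in gen V, ∀ a ∈ vert Z, a ≠ u → a ≠ v →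
        LinearIndependent ℚ (fun k => p (![u, v, a, t] k)) := by
      refine (Filter.eventually_all_finset _).2 (fun a ha => ?_)
      by_cases hau : a = u
      · exact Filter.Eventually.of_forall (fun p h => absurd hau h)
      by_cases hav : a = v
      · exact Filter.Eventually.of_forall (fun p _ h => absurd hav h)
      have hat : a ≠ t := by rintro rfl; exact ht ha
      filter_upwards [gen4 huv (Ne.symm hau) htu (Ne.symm hav) htv hat] with p hp _ _ using hp
    filter_upwards [hgen1, hgen2] with p hp1 hp2 x hx
    classical
    obtain ⟨A, hA⟩ := hp1 σ0 hσ0 x hx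
    obtain ⟨W, hWmem⟩ : ∃ W : Finset (Finset V), ∀ τ, τ ∈ W ↔
        τ ∈ Z ∧ Triv (insert u (insert v (insert t τ))) p x A :=
      ⟨Z.filter fun τ => Triv (insert u (insert v (insert t τ))) p x A, fun τ => mem_filter⟩
    have hWall : ∀ σ ∈ W, ∀ τ ∈ Z, ∀ a, a ≠ u → a ≠ v → a ∈ σ → a ∈ τ → τ ∈ W := by
      intro σ hσ τ hτ a hau hav h1 h2
      obtain ⟨A', hA'⟩ := hp1 τ hτ x hx
      rw [hWmem] at hσ
      have hAA : A = A' := by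
        apply mat_unique (hp2 a (mem_vert.2 ⟨τ, hτ, h2⟩) hau hav)
        intro k
        rw [← hσ.2.2 _ (by fin_cases k <;> simp [h1]), ← hA'.2 _ (by fin_cases k <;> simp [h2])]
      rw [hWmem, hAA]
      exact ⟨hτ, hA'⟩
    have hW3 : ∀ σ ∈ W, σ.card = 3 := fun σ h => hZ.1.1 σ ((hWmem _).1 h).1
    have hcomm : ∀ a b, (W.filter fun σ => a ∈ σ ∧ b ∈ σ) = (W.filter fun σ => b ∈ σ ∧ a ∈ σ) := by
      intro a b; ext σ; simp only [mem_filter]; rw [and_comm (a := a ∈ σ)]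
    have hWe : ∀ a b, a ≠ u → a ≠ v → a ≠ b → Even (W.filter fun σ => b ∈ σ ∧ a ∈ σ).card := by
      intro a b hau hav hab
      by_cases hex : ∃ σ ∈ W, a ∈ σ
      · obtain ⟨σ, hσ, haσ⟩ := hex
        have : (W.filter fun σ => b ∈ σ ∧ a ∈ σ) = (Z.filter fun σ => b ∈ σ ∧ a ∈ σ) := by
          ext τ
          rw [mem_filter, mem_filter]
          constructor
          · rintro ⟨h1, h2⟩; exact ⟨((hWmem _).1 h1).1, h2⟩
          · rintro ⟨h1, h2⟩; exact ⟨hWall σ hσ τ h1 a hau hav haσ h2.2, h2⟩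
        rw [this]
        exact hZ.1.2 b a hab.symm
      · push Not at hex
        rw [filter_false_of_mem]
        · simp
        · intro σ hσ h; exact hex σ hσ h.2
    have hWuv : Even (W.filter fun σ => u ∈ σ ∧ v ∈ σ).card :=
      parity_vertex hW3 u v huv (fun a hau hav => hWe a u hau hav hau)
    have hWc : IsCyc W := by
      refine ⟨hW3, fun a b hab => ?_⟩
      by_cases h1 : a ≠ u ∧ a ≠ v
      · rw [hcomm]; exact hWe a b h1.1 h1.2 hab
      by_cases h2 : b ≠ u ∧ b ≠ v
      · exact hWe b a h2.1 h2.2 hab.symm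
      have h1' : a = u ∨ a = v := by clear * - h1; tauto
      have h2' : b = u ∨ b = v := by clear * - h2; tauto
      rcases h1' with rfl | rfl <;> rcases h2' with rfl | rfl
      · exact absurd rfl hab
      · exact hWuv
      · rw [hcomm]; exact hWuv
      · exact absurd rfl hab
    have hWZ : W = Z := hZ.2.2 W (fun σ h => ((hWmem _).1 h).1) hWc ⟨σ0, (hWmem _).2 ⟨hσ0, hA⟩⟩
    refine ⟨A, hA.1, fun i hi => ?_⟩
    rw [mem_insert, mem_vert] at hi
    rcases hi with rfl | ⟨σ, hσ, hi⟩
    · exact hA.2 _ (by simp)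
    · rw [← hWZ, hWmem] at hσ
      exact hσ.2.2 _ (by simp [hi])

end split

section complex
variable [DecidableEq V]

theorem mem_vertices (K : SComplex V) (a : V) : a ∈ K.vertices ↔ {a} ∈ K.faces := by
  simp only [SComplex.vertices, Finset.mem_sup, id]
  constructor
  · rintro ⟨σ, hσ, ha⟩
    exact K.down_closed σ hσ _ (by simpa using ha) (singleton_nonempty a)
  · intro h; exact ⟨_, h, mem_singleton_self a⟩

/-- triangles of the link of a vertex -/
def lkT (Δ : SComplex V) (w : V) : Finset (Finset V) :=
  (Δ.link {w}).faces.filter fun σ => σ.card = 3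

theorem mem_lkT (Δ : SComplex V) (w : V) (σ : Finset V) :
    σ ∈ lkT Δ w ↔ σ.card = 3 ∧ w ∉ σ ∧ insert w σ ∈ Δ.faces := by
  simp only [lkT, SComplex.link, mem_filter]
  constructor
  · rintro ⟨⟨h1, h2, h3⟩, h4⟩
    refine ⟨h4, ?_, h3⟩
    intro h
    have : w ∈ ({w} : Finset V) ∩ σ := by simp [h]
    rw [h2] at this; simp at this
  · rintro ⟨h1, h2, h3⟩
    refine ⟨⟨Δ.down_closed _ h3 _ (subset_insert _ _) ?_, ?_, h3⟩, h1⟩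
    · rw [← card_pos]; omega
    · ext z; simp; rintro rfl; exact h2

theorem erase_lkT (Δ : SComplex V) {w : V} {τ : Finset V} (hτ : τ ∈ Δ.faces) (hc : τ.card = 4)
    (hw : w ∈ τ) : τ.erase w ∈ lkT Δ w := by
  rw [mem_lkT, card_erase_of_mem hw, hc, insert_erase hw]
  exact ⟨rfl, notMem_erase _ _, hτ⟩

theorem sub_face (Δ : SComplex V) {σ τ : Finset V} (hσ : σ ∈ Δ.faces) (h : τ ⊆ σ) {a : V} (ha : a ∈ τ) :
    τ ∈ Δ.faces := Δ.down_closed σ hσ τ h ⟨a, ha⟩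

theorem lk_count {Δ : SComplex V} (hΔ : Δ.IsNormal 3) {w a b : V} (hwa : w ≠ a) (hwb : w ≠ b)
    (hab : a ≠ b) (hf : ({w, a, b} : Finset V) ∈ Δ.faces) :
    ((lkT Δ w).filter fun σ => a ∈ σ ∧ b ∈ σ).card = 2 := by
  have h := hΔ.1.2.1 _ hf (by rw [card_eq_three]; exact ⟨w, a, b, hwa, hwb, hab, rfl⟩)
  rw [← h]
  apply Finset.card_bij (fun σ _ => insert w σ)
  · intro σ hσ
    rw [mem_filter, mem_lkT] at hσ
    rw [mem_filter]
    refine ⟨hσ.1.2.2, ?_, by rw [card_insert_of_notMem hσ.1.2.1, hσ.1.1]⟩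
    intro z
    simp only [mem_insert, mem_singleton]
    rintro (rfl | rfl | rfl)
    · exact Or.inl rfl
    · exact Or.inr hσ.2.1
    · exact Or.inr hσ.2.2
  · intro σ hσ σ' hσ' h
    rw [mem_filter, mem_lkT] at hσ hσ'
    rw [← erase_insert hσ.1.2.1, h, erase_insert hσ'.1.2.1]
  · intro τ hτ
    rw [mem_filter] at hτ
    have hw : w ∈ τ := hτ.2.1 (by simp)
    refine ⟨τ.erase w, ?_, insert_erase hw⟩
    rw [mem_filter]
    refine ⟨erase_lkT Δ hτ.1 hτ.2.2 hw, mem_erase.2 ⟨hwa.symm, hτ.2.1 (by simp)⟩,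
      mem_erase.2 ⟨hwb.symm, hτ.2.1 (by simp)⟩⟩

theorem lk_cyc {Δ : SComplex V} (hΔ : Δ.IsNormal 3) (w : V) : IsCyc (lkT Δ w) := by
  refine ⟨fun σ h => ((mem_lkT _ _ _).1 h).1, fun a b hab => ?_⟩
  by_cases hex : ((lkT Δ w).filter fun σ => a ∈ σ ∧ b ∈ σ).Nonempty
  · obtain ⟨σ, hσ⟩ := hex
    rw [mem_filter, mem_lkT] at hσ
    obtain ⟨⟨h1, h2, h3⟩, h4, h5⟩ := hσ
    have hwa : w ≠ a := by rintro rfl; exact h2 h4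
    have hwb : w ≠ b := by rintro rfl; exact h2 h5
    rw [lk_count hΔ hwa hwb hab]
    · exact even_two
    · apply sub_face Δ h3 (a := w)
      · intro z
        simp only [mem_insert, mem_singleton]
        rintro (rfl | rfl | rfl)
        · exact Or.inl rfl
        · exact Or.inr h4
        · exact Or.inr h5
      · simp
  · rw [not_nonempty_iff_eq_empty.1 hex]; simp

theorem lk_min {Δ : SComplex V} (hΔ : Δ.IsNormal 3) {w : V} (hw : w ∈ Δ.vertices) :
    MinCyc (lkT Δ w) := by
  rw [mem_vertices] at hw
  refine ⟨lk_cyc hΔ w, ?_, ?_⟩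
  · obtain ⟨τ, h1, h2, h3⟩ := hΔ.1.1 _ hw
    exact ⟨_, erase_lkT Δ h1 h3 (h2 (mem_singleton_self w))⟩
  intro W hW hWc hne
  -- across edges
  have step1 : ∀ σ ∈ W, ∀ σ' ∈ lkT Δ w, ∀ a b, a ≠ b → a ∈ σ → b ∈ σ → a ∈ σ' → b ∈ σ' → σ' ∈ W := by
    intro σ hσ σ' hσ' a b hab ha hb ha' hb'
    obtain ⟨h1, h2, h3⟩ := (mem_lkT _ _ _).1 (hW hσ)
    have hc : ((lkT Δ w).filter fun σ => a ∈ σ ∧ b ∈ σ).card = 2 := by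
      have hwa : w ≠ a := by rintro rfl; exact h2 ha
      have hwb : w ≠ b := by rintro rfl; exact h2 hb
      apply lk_count hΔ hwa hwb hab
      apply sub_face Δ h3 (a := w)
      · intro z
        simp only [mem_insert, mem_singleton]
        rintro (rfl | rfl | rfl)
        · exact Or.inl rfl
        · exact Or.inr ha
        · exact Or.inr hb
      · simp
    have hsub : (W.filter fun σ => a ∈ σ ∧ b ∈ σ) ⊆ ((lkT Δ w).filter fun σ => a ∈ σ ∧ b ∈ σ) :=
      filter_subset_filter _ hW
    have hpos : 0 < (W.filter fun σ => a ∈ σ ∧ b ∈ σ).card :=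
      card_pos.2 ⟨σ, mem_filter.2 ⟨hσ, ha, hb⟩⟩
    have hev := hWc.2 a b hab
    have heq := eq_of_subset_of_card_le hsub (by
      rw [hc]; obtain ⟨k, hk⟩ := hev; omega)
    have : σ' ∈ (W.filter fun σ => a ∈ σ ∧ b ∈ σ) := by
      rw [heq, mem_filter]; exact ⟨hσ', ha', hb'⟩
    exact (mem_filter.1 this).1
  have other : ∀ σ ∈ lkT Δ w, ∀ a ∈ σ, ∃ b ∈ σ, b ≠ a := by
    intro σ hσ a ha
    have h3 := ((mem_lkT _ _ _).1 hσ).1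
    have : 0 < (σ.erase a).card := by rw [card_erase_of_mem ha]; omega
    obtain ⟨b, hb⟩ := card_pos.1 this
    rw [mem_erase] at hb
    exact ⟨b, hb.2, hb.1⟩
  have step2 : ∀ σ ∈ W, ∀ σ' ∈ lkT Δ w, ∀ a, a ∈ σ → a ∈ σ' → σ' ∈ W := by
    intro σ hσ σ' hσ' a ha ha'
    obtain ⟨h1, h2, h3⟩ := (mem_lkT _ _ _).1 (hW hσ)
    have hwa : w ≠ a := fun h => h2 (h ▸ ha)
    have hface : ({w, a} : Finset V) ∈ Δ.faces := by
      apply sub_face Δ h3 (a := w) _ (by simp)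
      intro z
      simp only [mem_insert, mem_singleton]
      rintro (rfl | rfl)
      · exact Or.inl rfl
      · exact Or.inr ha
    have hconn := hΔ.2 _ hface (by rw [card_pair hwa])
    have hvl : ∀ ρ ∈ lkT Δ w, a ∈ ρ → ∀ b ∈ ρ, b ≠ a → b ∈ (Δ.link {w, a}).vertices := by
      intro ρ hρ haρ b hb hba
      obtain ⟨g1, g2, g3⟩ := (mem_lkT _ _ _).1 hρ
      have hwb : b ≠ w := fun h => g2 (h ▸ hb)
      rw [mem_vertices, SComplex.link, mem_filter]
      refine ⟨sub_face Δ g3 (a := b) (by simp [hb]) (by simp), ?_, ?_⟩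
      · ext z; simp; rintro (rfl | rfl) h
        · exact hwb h.symm
        · exact hba h.symm
      · apply sub_face Δ g3 (a := w) _ (by simp)
        intro z
        simp only [mem_insert, mem_singleton, mem_union]
        rintro ((rfl | rfl) | rfl)
        · exact Or.inl rfl
        · exact Or.inr haρ
        · exact Or.inr hb
    obtain ⟨b, hb, hba⟩ := other σ (hW hσ) a ha
    obtain ⟨b', hb', hba'⟩ := other σ' hσ' a ha'
    have hpath := hconn b (hvl σ (hW hσ) ha b hb hba) b' (hvl σ' hσ' ha' b' hb' hba')
    have hQ : b' ≠ a ∧ ∃ ρ ∈ W, a ∈ ρ ∧ b' ∈ ρ := by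
      clear hb' ha' hσ' hba'
      induction hpath with
      | refl => exact ⟨hba, σ, hσ, ha, hb⟩
      | tail _ hstep ih =>
        rename_i c d _
        obtain ⟨hca, ρ, hρ, haρ, hcρ⟩ := ih
        rw [SComplex.link, mem_filter] at hstep
        obtain ⟨_, g2, g3⟩ := hstep
        have hd : ∀ z, (z = w ∨ z = a) → z ≠ c ∧ z ≠ d := by
          intro z hz
          constructor
          · rintro rfl
            have : z ∈ ({w, a} : Finset V) ∩ {z, d} := by simp [hz]
            rw [g2] at this; simp at this
          · rintro rfl
            have : z ∈ ({w, a} : Finset V) ∩ {c, z} := by simp [hz]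
            rw [g2] at this; simp at this
        have hda := (hd a (Or.inr rfl)).2
        refine ⟨hda.symm, ?_⟩
        by_cases hcd : c = d
        · subst hcd; exact ⟨ρ, hρ, haρ, hcρ⟩
        · refine ⟨{a, c, d}, ?_, by simp, by simp⟩
          apply step1 ρ hρ _ _ a c hca.symm haρ hcρ (by simp) (by simp)
          rw [mem_lkT]
          refine ⟨card_eq_three.2 ⟨a, c, d, hca.symm, hda, hcd, rfl⟩, ?_, ?_⟩
          · simp only [mem_insert, mem_singleton, not_or]
            exact ⟨hwa, hd w (Or.inl rfl)⟩
          · convert g3 using 1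
            ext z; simp only [mem_insert, mem_singleton, mem_union, or_assoc]
    obtain ⟨_, ρ, hρ, haρ, hbρ⟩ := hQ
    exact step1 ρ hρ σ' hσ' a b' hba'.symm haρ hbρ ha' hb'
  have hconn := hΔ.2 _ hw (by simp)
  have hvl : ∀ ρ ∈ lkT Δ w, ∀ b ∈ ρ, b ∈ (Δ.link {w}).vertices := by
    intro ρ hρ b hb
    rw [mem_vertices]
    exact (Δ.link {w}).down_closed ρ (mem_filter.1 hρ).1 _ (by simpa using hb) (singleton_nonempty b)
  apply Subset.antisymm hW
  intro σ' hσ'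
  obtain ⟨σ, hσ⟩ := hne
  have hn : ∀ ρ ∈ lkT Δ w, ρ.Nonempty := by
    intro ρ hρ
    have := ((mem_lkT _ _ _).1 hρ).1
    rw [← card_pos]; omega
  obtain ⟨b, hb⟩ := hn σ (hW hσ)
  obtain ⟨b', hb'⟩ := hn σ' hσ'
  have hpath := hconn b (hvl σ (hW hσ) b hb) b' (hvl σ' hσ' b' hb')
  have hQ : ∃ ρ ∈ W, b' ∈ ρ := by
    clear hb' hσ'
    induction hpath with
    | refl => exact ⟨σ, hσ, hb⟩
    | tail _ hstep ih =>
      rename_i c d _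
      obtain ⟨ρ, hρ, hcρ⟩ := ih
      rw [SComplex.link, mem_filter] at hstep
      obtain ⟨_, g2, g3⟩ := hstep
      have hd : w ≠ c ∧ w ≠ d := by
        constructor
        · rintro rfl
          have : w ∈ ({w} : Finset V) ∩ {w, d} := by simp
          rw [g2] at this; simp at this
        · rintro rfl
          have : w ∈ ({w} : Finset V) ∩ {c, w} := by simp
          rw [g2] at this; simp at this
      obtain ⟨τ, e1, e2, e3⟩ := hΔ.1.1 _ g3
      have hwτ : w ∈ τ := e2 (by simp)
      have hmem := erase_lkT Δ e1 e3 hwτ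
      exact ⟨τ.erase w, step2 ρ hρ _ hmem c hcρ (mem_erase.2 ⟨hd.1.symm, e2 (by simp)⟩),
        mem_erase.2 ⟨hd.2.symm, e2 (by simp)⟩⟩
  obtain ⟨ρ, hρ, hbρ⟩ := hQ
  exact step2 ρ hρ σ' hσ' b' hbρ hb'

/-- closed neighbourhood -/
def nb (Δ : SComplex V) (w : V) : Finset V := insert w (vert (lkT Δ w))

theorem mem_nb {Δ : SComplex V} (hΔ : Δ.IsNormal 3) {w : V} (hw : w ∈ Δ.vertices) (a : V) :
    a ∈ nb Δ w ↔ ({w, a} : Finset V) ∈ Δ.faces := by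
  rw [mem_vertices] at hw
  rw [nb, mem_insert, mem_vert]
  constructor
  · rintro (rfl | ⟨σ, hσ, ha⟩)
    · simpa using hw
    · obtain ⟨h1, h2, h3⟩ := (mem_lkT _ _ _).1 hσ
      apply sub_face Δ h3 (a := w) _ (by simp)
      intro z
      simp only [mem_insert, mem_singleton]
      rintro (rfl | rfl)
      · exact Or.inl rfl
      · exact Or.inr ha
  · intro h
    by_cases haw : a = w
    · exact Or.inl haw
    right
    obtain ⟨τ, e1, e2, e3⟩ := hΔ.1.1 _ h
    exact ⟨_, erase_lkT Δ e1 e3 (e2 (by simp)), mem_erase.2 ⟨haw, e2 (by simp)⟩⟩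

theorem face_sub_nb {Δ : SComplex V} (hΔ : Δ.IsNormal 3) {τ : Finset V} (hτ : τ ∈ Δ.faces) {w : V}
    (hw : w ∈ τ) : τ ⊆ nb Δ w := by
  intro a ha
  rw [mem_nb hΔ ((mem_vertices _ _).2 (sub_face Δ hτ (a := w) (by simpa using hw) (by simp)))]
  apply sub_face Δ hτ (a := w) _ (by simp)
  intro z
  simp only [mem_insert, mem_singleton]
  rintro (rfl | rfl) <;> assumption

/-- a good configuration for `Δ` -/
def Good (Δ : SComplex V) (p : V → Fin 4 → ℚ) : Prop :=
  (∀ w ∈ Δ.vertices, Rig (Et w (lkT Δ w)) (nb Δ w) p) ∧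
  ∀ τ ∈ Δ.faces, τ.card = 4 → ∃ B : Fin 4 → V, (∀ k, B k ∈ τ) ∧ LinearIndependent ℚ (fun k => p (B k))

theorem exists_good {Δ : SComplex V} (hΔ : Δ.IsNormal 3) : ∃ p, Good Δ p := by
  have h1 : ∀ᶠ p in gen V, ∀ w ∈ Δ.vertices, Rig (Et w (lkT Δ w)) (nb Δ w) p := by
    refine (Filter.eventually_all_finset _).2 (fun w hw => ?_)
    refine cone_rig _ _ w (lk_min hΔ hw) ?_ le_rfl
    intro h
    obtain ⟨σ, h1, h2⟩ := mem_vert.1 h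
    exact ((mem_lkT _ _ _).1 h1).2.1 h2
  have h2 : ∀ᶠ p in gen V, ∀ τ ∈ Δ.faces, τ.card = 4 →
      ∃ B : Fin 4 → V, (∀ k, B k ∈ τ) ∧ LinearIndependent ℚ (fun k => p (B k)) := by
    refine (Filter.eventually_all_finset _).2 (fun τ hτ => ?_)
    by_cases hc : τ.card = 4
    · let e := τ.equivFinOfCardEq hc
      have hinj : Function.Injective (fun k => (e.symm k : V)) :=
        Subtype.val_injective.comp e.symm.injective
      filter_upwards [gen_indep _ hinj] with p hp _
      exact ⟨_, fun k => (e.symm k).2, hp⟩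
    · exact Filter.Eventually.of_forall (fun p h => absurd h hc)
  exact (h1.and h2).exists

theorem edge_compat {Δ : SComplex V} (hΔ : Δ.IsNormal 3) {p x : V → Fin 4 → ℚ} (hp : Good Δ p)
    {w w' : V} (h : ({w, w'} : Finset V) ∈ Δ.faces) {A A' : Matrix (Fin 4) (Fin 4) ℚ}
    (hA : Triv (nb Δ w) p x A) (hA' : Triv (nb Δ w') p x A') : A = A' := by
  obtain ⟨τ, e1, e2, e3⟩ := hΔ.1.1 _ h
  obtain ⟨B, hB, hI⟩ := hp.2 τ e1 e3
  apply mat_unique hI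
  intro k
  rw [← hA.2 _ (face_sub_nb hΔ e1 (e2 (by simp)) (hB k)), ← hA'.2 _ (face_sub_nb hΔ e1 (e2 (by simp)) (hB k))]

theorem star_mot {Δ : SComplex V} {w i j : V} (h : Et w (lkT Δ w) i j) :
    ({i, j} : Finset V) ∈ Δ.faces ∧ ({w, i, j} : Finset V) ∈ Δ.faces := by
  obtain ⟨σ, hσ, hi, hj⟩ := h
  obtain ⟨h1, h2, h3⟩ := (mem_lkT _ _ _).1 hσ
  constructor
  · apply sub_face Δ h3 (a := i) _ (by simp)
    intro z
    rw [mem_insert, mem_singleton]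
    rintro (rfl | rfl) <;> assumption
  · apply sub_face Δ h3 (a := i) _ (by simp)
    intro z
    rw [mem_insert, mem_insert, mem_singleton]
    rintro (rfl | rfl | rfl)
    · exact mem_insert_self _ _
    · assumption
    · assumption

/-- global rigidity of `Δ` -/
theorem global_rig {Δ : SComplex V} (hΔ : Δ.IsNormal 3) {p x : V → Fin 4 → ℚ} (hp : Good Δ p)
    (hx : Mot (fun i j => ({i, j} : Finset V) ∈ Δ.faces) p x) {t : V} (ht : t ∈ Δ.vertices) :
    ∃ A, Triv Δ.vertices p x A := by
  have hloc : ∀ w ∈ Δ.vertices, ∃ A, Triv (nb Δ w) p x A := fun w hw =>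
    hp.1 w hw x (fun i j h => hx i j (star_mot h).1)
  obtain ⟨A, hA⟩ := hloc t ht
  refine ⟨A, hA.1, fun i hi => ?_⟩
  suffices h : Triv (nb Δ i) p x A from h.2 i (by simp [nb])
  rw [mem_vertices] at ht hi
  obtain ⟨σ, s1, s2, s3⟩ := hΔ.1.1 _ ht
  obtain ⟨τ, t1, t2, t3⟩ := hΔ.1.1 _ hi
  have hvert : ∀ ρ ∈ Δ.faces, ∀ c ∈ ρ, c ∈ Δ.vertices := by
    intro ρ hρ c hc
    rw [mem_vertices]
    exact sub_face Δ hρ (a := c) (by simpa using hc) (by simp)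
  have hprop : ∀ ρ ∈ Δ.faces, ∀ c ∈ ρ, ∀ d ∈ ρ, Triv (nb Δ c) p x A → Triv (nb Δ d) p x A := by
    intro ρ hρ c hc d hd h
    obtain ⟨A', hA'⟩ := hloc d (hvert ρ hρ d hd)
    have hcd : ({c, d} : Finset V) ∈ Δ.faces := by
      apply sub_face Δ hρ (a := c) _ (by simp)
      intro z
      rw [mem_insert, mem_singleton]
      rintro (rfl | rfl) <;> assumption
    rw [edge_compat hΔ hp hcd h hA']
    exact hA'
  have hpath := hΔ.1.2.2 σ s1 τ t1 s3 t3
  have : ∀ c ∈ τ, Triv (nb Δ c) p x A := by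
    clear t1 t2 t3
    induction hpath with
    | refl => exact fun c hc => hprop σ s1 t (s2 (by simp)) c hc hA
    | tail _ hstep ih =>
      rename_i ρ ρ' _
      obtain ⟨g1, g2, _, _, g5⟩ := hstep
      have : 0 < (ρ ∩ ρ').card := by omega
      obtain ⟨c, hc⟩ := card_pos.1 this
      rw [mem_inter] at hc
      exact fun d hd => hprop ρ' g2 c hc.2 d hd (ih c hc.1)
  exact this i (t2 (by simp))

end complex

section final
variable [DecidableEq V]

theorem other_edge {Ω : SComplex V} (hc : Ω.IsCircle) {u v : V} (huv : u ≠ v)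
    (he : ({u, v} : Finset V) ∈ Ω.faces) :
    ∃ w, w ≠ u ∧ w ≠ v ∧ ({v, w} : Finset V) ∈ Ω.faces ∧
      ∀ z, ({v, z} : Finset V) ∈ Ω.faces → z ≠ v → z = u ∨ z = w := by
  have hv : v ∈ Ω.vertices := by
    rw [mem_vertices]; exact sub_face Ω he (a := v) (by simp) (by simp)
  have h2 := hc.2.2.2 v hv
  have hm : ({u, v} : Finset V) ∈ Ω.faces.filter fun e => e.card = 2 ∧ v ∈ e := by
    rw [mem_filter]; exact ⟨he, card_pair huv, by simp⟩
  have h1 : ((Ω.faces.filter fun e => e.card = 2 ∧ v ∈ e).erase {u, v}).card = 1 := by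
    rw [card_erase_of_mem hm, h2]
  obtain ⟨e, he1⟩ := card_eq_one.1 h1
  have hee : e ∈ (Ω.faces.filter fun e => e.card = 2 ∧ v ∈ e).erase {u, v} := by rw [he1]; simp
  rw [mem_erase, mem_filter] at hee
  obtain ⟨hne, hef, hec, hev⟩ := hee
  have h3 : (e.erase v).card = 1 := by rw [card_erase_of_mem hev, hec]
  obtain ⟨w, hw⟩ := card_eq_one.1 h3
  have hew : e = {v, w} := by rw [← insert_erase hev, hw]
  have hwv : w ≠ v := by
    have : w ∈ e.erase v := by rw [hw]; simp
    exact (mem_erase.1 this).1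
  refine ⟨w, ?_, hwv, hew ▸ hef, ?_⟩
  · rintro rfl; exact hne (by rw [hew, pair_comm])
  · intro z hz hzv
    by_cases hzu : z = u
    · exact Or.inl hzu
    right
    have : ({v, z} : Finset V) ∈ (Ω.faces.filter fun e => e.card = 2 ∧ v ∈ e).erase {u, v} := by
      rw [mem_erase, mem_filter]
      refine ⟨?_, hz, card_pair hzv.symm, by simp⟩
      intro h
      have : z ∈ ({u, v} : Finset V) := by rw [← h]; simp
      simp at this
      rcases this with h | h
      · exact hzu h
      · exact hzv h
    rw [he1, mem_singleton, hew] at this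
    have h4 : z ∈ ({v, w} : Finset V) := by rw [← this]; simp
    simp at h4
    rcases h4 with h | h
    · exact absurd h hzv
    · exact h

theorem redundant {Δ Ω : SComplex V} (hΔ : Δ.IsNormal 3)
    (hind : Ω.faces = Δ.faces.filter fun σ => σ ⊆ Ω.vertices) (hc : Ω.IsCircle)
    {p x : V → Fin 4 → ℚ} (hp : Good Δ p) {u v : V} (huv : u ≠ v)
    (he : ({u, v} : Finset V) ∈ Ω.faces)
    (hx : ∀ i j, ({i, j} : Finset V) ∈ Δ.faces → ({i, j} : Finset V) ≠ {u, v} →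
      p j ⬝ᵥ x i = p i ⬝ᵥ x j) : p v ⬝ᵥ x u = p u ⬝ᵥ x v := by
  have hsub : Ω.faces ⊆ Δ.faces := by rw [hind]; exact filter_subset _ _
  have hvert : ∀ σ ∈ Ω.faces, ∀ a ∈ σ, a ∈ Ω.vertices := by
    intro σ hσ a ha
    rw [mem_vertices]; exact sub_face Ω hσ (a := a) (by simpa using ha) (by simp)
  have huΩ := hvert _ he u (by simp)
  have hvΩ := hvert _ he v (by simp)
  have hloc : ∀ w ∈ Ω.vertices, w ≠ u → w ≠ v → ∃ A, Triv (nb Δ w) p x A := by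
    intro w hw hwu hwv
    refine hp.1 w ?_ x (fun i j h => ?_)
    · rw [mem_vertices] at hw ⊢; exact hsub hw
    · obtain ⟨h1, h2⟩ := star_mot h
      apply hx i j h1
      intro h3
      rw [h3] at h2
      have : ({w, u, v} : Finset V) ∈ Ω.faces := by
        rw [hind, mem_filter]
        refine ⟨h2, ?_⟩
        intro z
        rw [mem_insert, mem_insert, mem_singleton]
        rintro (rfl | rfl | rfl) <;> assumption
      have h4 := hc.1 _ this
      rw [card_eq_three.2 ⟨w, u, v, hwu, hwv, huv, rfl⟩] at h4
      omega
  obtain ⟨w1, h1u, h1v, h1e, h1z⟩ := other_edge hc huv he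
  have he' : ({v, u} : Finset V) ∈ Ω.faces := by rw [pair_comm]; exact he
  obtain ⟨w2, h2v, h2u, h2e, h2z⟩ := other_edge hc huv.symm he'
  have h1Ω := hvert _ h1e w1 (by simp)
  have h2Ω := hvert _ h2e w2 (by simp)
  obtain ⟨A, hA⟩ := hloc w1 h1Ω h1u h1v
  have hnb : ∀ a b, ({a, b} : Finset V) ∈ Ω.faces → a ∈ nb Δ b := fun a b h =>
    face_sub_nb hΔ (hsub h) (by simp) (by simp)
  have key : Triv (nb Δ w2) p x A := by
    by_contra hw2
    classical
    let C := Ω.vertices.filter fun w => w ≠ u ∧ w ≠ v ∧ Triv (nb Δ w) p x A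
    have hC : ∀ w, w ∈ C ↔ w ∈ Ω.vertices ∧ w ≠ u ∧ w ≠ v ∧ Triv (nb Δ w) p x A := fun w => mem_filter
    have hpair : ∀ a b, ({a, b} : Finset V) ∈ Ω.faces → a ≠ b → ({a, b} : Finset V) ≠ {v, w1} →
        a ∈ C → b ∈ C := by
      intro a b hab hne hn ha
      rw [hC] at ha ⊢
      obtain ⟨a1, a2, a3, a4⟩ := ha
      have hba : ({b, a} : Finset V) ∈ Ω.faces := by rw [pair_comm]; exact hab
      have hbu : b ≠ u := by
        rintro rfl
        rcases h2z a hba hne with h | h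
        · exact a3 h
        · exact hw2 (h ▸ a4)
      have hbv : b ≠ v := by
        rintro rfl
        rcases h1z a hba hne with h | h
        · exact a2 h
        · exact hn (by rw [h, pair_comm])
      have hbΩ := hvert _ hab b (by simp)
      refine ⟨hbΩ, hbu, hbv, ?_⟩
      obtain ⟨A', hA'⟩ := hloc b hbΩ hbu hbv
      rw [edge_compat hΔ hp (hsub hab) a4 hA']
      exact hA'
    let E2 := Ω.faces.filter fun e => e.card = 2
    have hsum := Finset.sum_card_bipartiteAbove_eq_sum_card_bipartiteBelow (s := C) (t := E2)
      (fun w e => w ∈ e)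
    have hL : ∑ w ∈ C, (E2.bipartiteAbove (fun w e => w ∈ e) w).card = ∑ w ∈ C, 2 := by
      apply sum_congr rfl
      intro w hw
      rw [← hc.2.2.2 w ((hC w).1 hw).1, bipartiteAbove, filter_filter]
    have h1E : ({v, w1} : Finset V) ∈ E2 := mem_filter.2 ⟨h1e, card_pair h1v.symm⟩
    rw [hL, ← add_sum_erase _ _ h1E] at hsum
    have hone : (C.bipartiteBelow (fun w e => w ∈ e) ({v, w1} : Finset V)) = {w1} := by
      ext z
      simp only [mem_bipartiteBelow, hC, mem_insert, mem_singleton]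
      constructor
      · rintro ⟨⟨_, _, h3, _⟩, h | h⟩
        · exact absurd h h3
        · exact h
      · rintro rfl
        exact ⟨⟨h1Ω, h1u, h1v, hA⟩, Or.inr rfl⟩
    have hrest : Even (∑ e ∈ E2.erase {v, w1}, (C.bipartiteBelow (fun w e => w ∈ e) e).card) := by
      apply Finset.even_sum
      intro e hee
      rw [mem_erase, mem_filter] at hee
      obtain ⟨hne, hef, hec⟩ := hee
      obtain ⟨a, b, hab, rfl⟩ := card_eq_two.1 hec
      by_cases ha : a ∈ C
      · have hb := hpair a b hef hab hne ha
        have : (C.bipartiteBelow (fun w e => w ∈ e) ({a, b} : Finset V)) = {a, b} := by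
          ext z
          rw [mem_bipartiteBelow, mem_insert, mem_singleton]
          constructor
          · exact fun h => h.2
          · rintro (rfl | rfl)
            · exact ⟨ha, Or.inl rfl⟩
            · exact ⟨hb, Or.inr rfl⟩
        rw [this, hec]; exact even_two
      · have hb : b ∉ C := fun hb => ha (hpair b a (by rw [pair_comm]; exact hef) hab.symm
          (by rw [pair_comm]; exact hne) hb)
        have : (C.bipartiteBelow (fun w e => w ∈ e) ({a, b} : Finset V)) = ∅ := by
          ext z
          rw [mem_bipartiteBelow, mem_insert, mem_singleton]
          constructor
          · rintro ⟨h, rfl | rfl⟩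
            · exact absurd h ha
            · exact absurd h hb
          · intro h; simp at h
        rw [this]; simp
    rw [hone, card_singleton, sum_const, smul_eq_mul] at hsum
    obtain ⟨k, hk⟩ := hrest
    omega
  rw [hA.2 v (hnb v w1 h1e), key.2 u (hnb u w2 h2e)]
  exact symm_dot hA.1 _ _

theorem fNum_zero (K : SComplex V) : K.fNum 0 = K.vertices.card := by
  rw [SComplex.fNum]
  symm
  apply Finset.card_bij (fun a _ => ({a} : Finset V))
  · intro a ha
    rw [mem_filter]
    exact ⟨(mem_vertices _ _).1 ha, by simp⟩
  · intro a _ b _ h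
    exact singleton_injective h
  · intro σ hσ
    rw [mem_filter] at hσ
    obtain ⟨a, rfl⟩ := card_eq_one.1 hσ.2
    exact ⟨a, (mem_vertices _ _).2 hσ.1, rfl⟩

theorem mem_link_faces (Δ : SComplex V) (t : V) (σ : Finset V) :
    σ ∈ (Δ.link {t}).faces ↔ σ ∈ Δ.faces ∧ t ∉ σ ∧ insert t σ ∈ Δ.faces := by
  rw [SComplex.link, mem_filter]
  have h : ({t} : Finset V) ∩ σ = ∅ ↔ t ∉ σ := by
    rw [← disjoint_iff_inter_eq_empty, disjoint_singleton_left]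
  rw [h]
  rfl

theorem mem_link_vertices (Δ : SComplex V) (t a : V) :
    a ∈ (Δ.link {t}).vertices ↔ t ≠ a ∧ ({t, a} : Finset V) ∈ Δ.faces := by
  rw [mem_vertices, mem_link_faces, mem_singleton]
  constructor
  · rintro ⟨_, h2, h3⟩; exact ⟨h2, h3⟩
  · rintro ⟨h2, h3⟩; exact ⟨sub_face Δ h3 (a := a) (by simp) (by simp), h2, h3⟩

theorem nb_eq {Δ : SComplex V} (hΔ : Δ.IsNormal 3) {t : V} (ht : t ∈ Δ.vertices) :
    nb Δ t = insert t (Δ.link {t}).vertices := by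
  ext a
  rw [mem_nb hΔ ht, mem_insert, mem_link_vertices]
  by_cases h : a = t
  · subst h
    rw [mem_vertices] at ht
    simp [ht]
  · have : t ≠ a := fun h' => h h'.symm
    simp [h, this]

theorem card_nb {Δ : SComplex V} (hΔ : Δ.IsNormal 3) {t : V} (ht : t ∈ Δ.vertices) :
    (nb Δ t).card = (Δ.link {t}).fNum 0 + 1 := by
  rw [nb_eq hΔ ht, card_insert_of_notMem, fNum_zero]
  rw [mem_link_vertices]; simp

theorem card_star_edges (Δ : SComplex V) (t : V) :
    ((Δ.faces.filter fun σ => σ.card = 2).filter fun e => insert t e ∈ Δ.faces).card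
      = (Δ.link {t}).fNum 0 + (Δ.link {t}).fNum 1 := by
  rw [← card_filter_add_card_filter_not (fun e => t ∈ e)]
  congr 1
  · rw [fNum_zero]
    symm
    apply Finset.card_bij (fun a _ => ({t, a} : Finset V))
    · intro a ha
      rw [mem_link_vertices] at ha
      simp only [mem_filter]
      refine ⟨⟨⟨ha.2, card_pair ha.1⟩, ?_⟩, by simp⟩
      rw [insert_eq_of_mem (by simp)]; exact ha.2
    · intro a ha b hb h
      rw [mem_link_vertices] at ha
      have : a ∈ ({t, b} : Finset V) := by rw [← h]; simp
      rw [mem_insert, mem_singleton] at this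
      rcases this with h | h
      · exact absurd h.symm ha.1
      · exact h
    · intro e he
      simp only [mem_filter] at he
      obtain ⟨⟨⟨h1, h2⟩, _⟩, h4⟩ := he
      have h3 : (e.erase t).card = 1 := by rw [card_erase_of_mem h4, h2]
      obtain ⟨a, ha⟩ := card_eq_one.1 h3
      have hea : e = {t, a} := by rw [← insert_erase h4, ha]
      refine ⟨a, ?_, hea.symm⟩
      rw [mem_link_vertices, ← hea]
      refine ⟨?_, h1⟩
      have : a ∈ e.erase t := by rw [ha]; simp
      exact (mem_erase.1 this).1.symm
  · rw [SComplex.fNum]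
    congr 1
    ext e
    simp only [mem_filter, mem_link_faces]
    constructor
    · rintro ⟨⟨⟨h1, h2⟩, h3⟩, h4⟩; exact ⟨⟨h1, h4, h3⟩, h2⟩
    · rintro ⟨⟨h1, h4, h3⟩, h2⟩; exact ⟨⟨⟨h1, h2⟩, h3⟩, h4⟩

/-- extension by zero -/
def ext0 (R : Finset V) : (R → Fin 4 → ℚ) →ₗ[ℚ] (V → Fin 4 → ℚ) where
  toFun x v := if h : v ∈ R then x ⟨v, h⟩ else 0
  map_add' x y := by
    funext v
    by_cases h : v ∈ R <;> simp [h]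
  map_smul' c x := by
    funext v
    by_cases h : v ∈ R <;> simp [h]

theorem exists_motion (R : Finset V) (D : Finset (Finset V)) (p : V → Fin 4 → ℚ)
    (hD : ∀ e ∈ D, e.card = 2) (hcard : D.card < 4 * R.card) :
    ∃ y : V → Fin 4 → ℚ, (∀ v, v ∉ R → y v = 0) ∧ (∃ v ∈ R, y v ≠ 0) ∧
      ∀ i j, ({i, j} : Finset V) ∈ D → p j ⬝ᵥ y i = p i ⬝ᵥ y j := by
  have hch : ∀ e : D, ∃ a b : V, (e : Finset V) = {a, b} := by
    intro e
    obtain ⟨a, b, _, h⟩ := card_eq_two.1 (hD e e.2)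
    exact ⟨a, b, h⟩
  choose a b hab using hch
  let L : (R → Fin 4 → ℚ) →ₗ[ℚ] (D → ℚ) :=
    { toFun := fun x e => p (b e) ⬝ᵥ ext0 R x (a e) - p (a e) ⬝ᵥ ext0 R x (b e)
      map_add' := by
        intro x y
        funext e
        simp only [map_add, Pi.add_apply, dotProduct_add]
        ring
      map_smul' := by
        intro c x
        funext e
        simp only [map_smul, Pi.smul_apply, dotProduct_smul, RingHom.id_apply, smul_eq_mul]
        ring }
  have hker : LinearMap.ker L ≠ ⊥ := by
    apply LinearMap.ker_ne_bot_of_finrank_lt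
    rw [Module.finrank_pi, Module.finrank_pi_fintype]
    simp
    omega
  obtain ⟨x, hx, hx0⟩ := (Submodule.ne_bot_iff _).1 hker
  refine ⟨ext0 R x, ?_, ?_, ?_⟩
  · intro v hv
    simp [ext0, hv]
  · by_contra hcon
    push Not at hcon
    apply hx0
    funext v
    have := hcon v v.2
    simpa [ext0] using this
  · intro i j hij
    have h1 : L x ⟨_, hij⟩ = 0 := by
      rw [LinearMap.mem_ker.1 hx]; rfl
    have h2 : p (b ⟨_, hij⟩) ⬝ᵥ ext0 R x (a ⟨_, hij⟩) - p (a ⟨_, hij⟩) ⬝ᵥ ext0 R x (b ⟨_, hij⟩) = 0 := h1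
    have h3 := hab ⟨_, hij⟩
    generalize a ⟨_, hij⟩ = a' at h2 h3
    generalize b ⟨_, hij⟩ = b' at h2 h3
    have h4 : ({i, j} : Finset V) = {a', b'} := h3
    have hne : i ≠ j := by
      rintro rfl
      have := hD _ hij
      simp at this
    have hi : i ∈ ({a', b'} : Finset V) := by rw [← h4]; simp
    have hj : j ∈ ({a', b'} : Finset V) := by rw [← h4]; simp
    rw [mem_insert, mem_singleton] at hi hj
    rcases hi with rfl | rfl <;> rcases hj with rfl | rfl
    · exact absurd rfl hne
    · exact sub_eq_zero.1 h2
    · exact (sub_eq_zero.1 h2).symm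
    · exact absurd rfl hne

theorem edge_in_star {Δ Ω : SComplex V} {t : V} (hΔ : Δ.IsNormal 3) (ht : t ∈ Δ.vertices)
    (hmin : Δ.g2 3 = (Δ.link {t}).g2 2)
    (hind : Ω.faces = Δ.faces.filter fun σ => σ ⊆ Ω.vertices) (hc : Ω.IsCircle)
    {u v : V} (huv : u ≠ v) (he : ({u, v} : Finset V) ∈ Ω.faces) :
    insert t ({u, v} : Finset V) ∈ Δ.faces := by
  by_contra hnot
  obtain ⟨p, hp⟩ := exists_good hΔ
  have heΔ : ({u, v} : Finset V) ∈ Δ.faces := by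
    rw [hind] at he; exact (mem_filter.1 he).1
  let F := Δ.faces.filter fun σ => σ.card = 2
  let F0 := F.filter fun e => insert t e ∈ Δ.faces
  let R := Δ.vertices \ nb Δ t
  let D := (F \ F0).erase {u, v}
  have hnbs : nb Δ t ⊆ Δ.vertices := by
    intro a ha
    rw [mem_nb hΔ ht] at ha
    rw [mem_vertices]
    exact sub_face Δ ha (a := a) (by simp) (by simp)
  have hF : F.card = Δ.fNum 1 := rfl
  have hF0 : F0.card = (Δ.link {t}).fNum 0 + (Δ.link {t}).fNum 1 := card_star_edges Δ t
  have hF0F : F0 ⊆ F := filter_subset _ _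
  have c1 := card_sdiff_add_card_eq_card hF0F
  have c2 := card_sdiff_add_card_eq_card hnbs
  have c3 := card_nb hΔ ht
  have c4 := fNum_zero Δ
  have huvm : ({u, v} : Finset V) ∈ F \ F0 := by
    rw [mem_sdiff]
    exact ⟨mem_filter.2 ⟨heΔ, card_pair huv⟩, fun h => hnot (mem_filter.1 h).2⟩
  have c5 : D.card + 1 = (F \ F0).card := card_erase_add_one huvm
  have hcard : D.card < 4 * R.card := by
    simp only [SComplex.g2] at hmin
    have e1 : Nat.choose (3 + 2) 2 = 10 := rfl
    have e2 : Nat.choose (2 + 2) 2 = 6 := rfl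
    rw [e1, e2] at hmin
    push_cast at hmin
    change D.card < 4 * (Δ.vertices \ nb Δ t).card
    omega
  obtain ⟨y, hy0, ⟨z, hzR, hz⟩, hy⟩ := exists_motion R D p
    (fun e he => (mem_filter.1 (mem_sdiff.1 (mem_of_mem_erase he)).1).2) hcard
  have hynb : ∀ a ∈ nb Δ t, y a = 0 := fun a ha => hy0 a (fun h => (mem_sdiff.1 h).2 ha)
  have hmot : ∀ i j, ({i, j} : Finset V) ∈ Δ.faces → ({i, j} : Finset V) ≠ {u, v} →
      p j ⬝ᵥ y i = p i ⬝ᵥ y j := by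
    intro i j hij hne
    by_cases hij' : i = j
    · rw [hij']
    by_cases hst : insert t ({i, j} : Finset V) ∈ Δ.faces
    · have hs := face_sub_nb hΔ hst (mem_insert_self t _)
      rw [hynb i (hs (by simp)), hynb j (hs (by simp))]; simp
    · apply hy
      rw [mem_erase, mem_sdiff]
      exact ⟨hne, mem_filter.2 ⟨hij, card_pair hij'⟩, fun h => hst (mem_filter.1 h).2⟩
  have hred := redundant hΔ hind hc hp huv he hmot
  have hmot' : Mot (fun i j => ({i, j} : Finset V) ∈ Δ.faces) p y := by
    intro i j hij
    by_cases hne : ({i, j} : Finset V) = {u, v}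
    · have hi : i ∈ ({u, v} : Finset V) := by rw [← hne]; simp
      have hj : j ∈ ({u, v} : Finset V) := by rw [← hne]; simp
      rw [mem_insert, mem_singleton] at hi hj
      rcases hi with rfl | rfl <;> rcases hj with rfl | rfl
      · rfl
      · exact hred
      · exact hred.symm
      · rfl
    · exact hmot i j hij hne
  obtain ⟨A, hA⟩ := global_rig hΔ hp hmot' ht
  obtain ⟨τ, e1, e2, e3⟩ := hΔ.1.1 _ ((mem_vertices _ _).1 ht)
  obtain ⟨B, hB, hI⟩ := hp.2 τ e1 e3
  have hA0 : A = 0 := by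
    apply mat_unique hI
    intro k
    have hk := face_sub_nb hΔ e1 (e2 (mem_singleton_self t)) (hB k)
    rw [← hA.2 _ (hnbs hk), hynb _ hk]; simp
  apply hz
  rw [hA.2 z (mem_sdiff.1 hzR).1, hA0]; simp

theorem main {Δ Ω : SComplex V} {t : V} (hΔ : Δ.IsNormal 3) (ht : t ∈ Δ.vertices)
    (hmin : Δ.g2 3 = (Δ.link {t}).g2 2)
    (hind : Ω.faces = Δ.faces.filter fun σ => σ ⊆ Ω.vertices) (hc : Ω.IsCircle) :
    Ω.faces ⊆ (Δ.star t).faces ∧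
      ∀ v ∈ Ω.vertices, v = t ∨ ({t, v} : Finset V) ∈ Δ.faces := by
  have h2 : ∀ σ ∈ Ω.faces, σ.card = 2 → insert t σ ∈ Δ.faces := by
    intro σ hσ hσc
    obtain ⟨u, v, huv, rfl⟩ := card_eq_two.1 hσc
    exact edge_in_star hΔ ht hmin hind hc huv hσ
  have h1 : ∀ v ∈ Ω.vertices, ({t, v} : Finset V) ∈ Δ.faces := by
    intro v hv
    have h := hc.2.2.2 v hv
    have hpos : 0 < (Ω.faces.filter fun e => e.card = 2 ∧ v ∈ e).card := by omega
    obtain ⟨e, he⟩ := card_pos.1 hpos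
    rw [mem_filter] at he
    apply sub_face Δ (h2 e he.1 he.2.1) (a := t) _ (by simp)
    exact insert_subset_insert _ (by simpa using he.2.2)
  refine ⟨?_, fun v hv => Or.inr (h1 v hv)⟩
  intro σ hσ
  rw [SComplex.star, mem_filter]
  refine ⟨by rw [hind] at hσ; exact (mem_filter.1 hσ).1, ?_⟩
  have hle := hc.1 σ hσ
  have hpos := card_pos.2 (Ω.nonempty_of_mem σ hσ)
  by_cases hσ2 : σ.card = 2
  · exact h2 σ hσ hσ2
  · obtain ⟨a, rfl⟩ := card_eq_one.1 (by omega : σ.card = 1)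
    exact h1 a ((mem_vertices _ _).2 hσ)

end final

end HypRig

/-- if `Δ` is a 3-dimensional normal pseudomanifold which is
`g₂`-minimal with respect to a vertex `t`, then any induced subcomplex `Ω` of `Δ`
which is a circle is contained in `st(t, Δ)`; in particular every vertex of `Ω`
is `t` or a neighbour of `t`. -/
theorem induced_circle_subset_star {V : Type} [DecidableEq V]
    (Δ Ω : SComplex V) (t : V)
    (hΔ : Δ.IsNormal 3) (ht : t ∈ Δ.vertices)
    (hmin : Δ.g2 3 = (Δ.link {t}).g2 2)
    (hind : Ω.faces = Δ.faces.filter fun σ => σ ⊆ Ω.vertices)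
    (hcirc : Ω.IsCircle) :
    Ω.faces ⊆ (Δ.star t).faces ∧
      ∀ v ∈ Ω.vertices, v = t ∨ ({t, v} : Finset V) ∈ Δ.faces := by
  exact HypRig.main hΔ ht hmin hind hcirc
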